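/- Let k be a field, e ≥ 3 an integer, 𝓠 = k[X₁, …, X_e] the polynomial ring, and Q the localization of 𝓠 at the maximal ideal (X₁, …, X_e). Let Φ be a 2 × 4 matrix whose entries are linear forms (homogeneous polynomials of degree 1) in 𝓠, let 𝓘 be the ideal of 𝓠 generated by the 2 × 2 minors of Φ, and assume that 𝓘 contains a 𝓠-regular sequence of length 3. Then the extension I of 𝓘 to Q is a grade 3 perfect ideal of resolution format (1, 6, 8, 3), and I is not licci. -/

import Mathlib

set_option linter.unusedSimpArgs false


/-- An ideal `I` in a commutative Noetherian local ring `Q` has **resolution format**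
`(1, m, m+n-1, n)` if the minimal free resolution of `Q/I` over `Q` is
`0 → Q^n → Q^{m+n-1} → Q^m → Q`, i.e. there is an exact complex of free modules of the
indicated ranks augmented by `Q → Q/I → 0`, which is minimal in the sense that each
differential maps into `𝔫` times the target (`𝔫` the maximal ideal).  Equivalently, the
`i`-th entry of the format is the Betti number `dim_k Tor_i^Q(Q/I, k)`. -/
def HasResolutionFormat {Q : Type*} [CommRing Q] [IsLocalRing Q]
    (I : Ideal Q) (m n : ℕ) : Prop :=
  ∃ (d1 : (Fin m → Q) →ₗ[Q] Q)
    (d2 : (Fin (m + n - 1) → Q) →ₗ[Q] (Fin m → Q))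
    (d3 : (Fin n → Q) →ₗ[Q] (Fin (m + n - 1) → Q)),
    LinearMap.range d1 = I ∧
    LinearMap.range d2 = LinearMap.ker d1 ∧
    LinearMap.range d3 = LinearMap.ker d2 ∧
    LinearMap.ker d3 = ⊥ ∧
    I ≤ IsLocalRing.maximalIdeal Q ∧
    LinearMap.range d2 ≤ (IsLocalRing.maximalIdeal Q) • (⊤ : Submodule Q (Fin m → Q)) ∧
    LinearMap.range d3 ≤ (IsLocalRing.maximalIdeal Q) • (⊤ : Submodule Q (Fin (m + n - 1) → Q))

/-- `I` is a grade `3` perfect ideal of resolution format `(1, m, m+n-1, n)`: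
`I` contains a `Q`-regular sequence of length `3`, one has `m ≥ 3` and `n ≥ 1`, and the
minimal free resolution of `Q/I` has the format `(1, m, m+n-1, n)` (in particular `Q/I`
has projective dimension `3` as a `Q`-module, since `n ≥ 1`). -/
def IsGrade3PerfectOfFormat {Q : Type*} [CommRing Q] [IsLocalRing Q]
    (I : Ideal Q) (m n : ℕ) : Prop :=
  (∃ x y z : Q, x ∈ I ∧ y ∈ I ∧ z ∈ I ∧ RingTheory.Sequence.IsRegular Q [x, y, z]) ∧
  3 ≤ m ∧ 1 ≤ n ∧ HasResolutionFormat I m n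

/-- `J` is **directly linked** to `I` if there is a `Q`-regular sequence `x₁, x₂, x₃` of
elements of `I` with `J = (x₁, x₂, x₃) : I`. -/
def DirectlyLinked {Q : Type*} [CommRing Q] (I J : Ideal Q) : Prop :=
  ∃ x y z : Q, x ∈ I ∧ y ∈ I ∧ z ∈ I ∧ RingTheory.Sequence.IsRegular Q [x, y, z] ∧
    J = Submodule.colon (Ideal.span {x, y, z}) I

/-- `J` is **linked** to `I` if there is a finite chain of ideals
`I = J₀, J₁, …, J_r = J` in which `J_{i+1}` is directly linked to `J_i` for every `i`. -/
def Linked {Q : Type*} [CommRing Q] (I J : Ideal Q) : Prop :=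
  Relation.ReflTransGen (fun A B => DirectlyLinked A B) I J

/-- `I` is **licci** if it is linked to an ideal generated by a `Q`-regular sequence of
length `3`, i.e. `I` is in the linkage class of a complete intersection ideal. -/
def Licci {Q : Type*} [CommRing Q] (I : Ideal Q) : Prop :=
  ∃ C : Ideal Q, Linked I C ∧
    ∃ x y z : Q, RingTheory.Sequence.IsRegular Q [x, y, z] ∧ C = Ideal.span {x, y, z}

/-- The ideal of `2 × 2` minors of a matrix `Φ` over a commutative ring: the ideal
generated by the determinants of all `2 × 2` submatrices of `Φ`. -/
def minors2 {R : Type*} [CommRing R] {p q : ℕ}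
    (Φ : Matrix (Fin p) (Fin q) R) : Ideal R :=
  Ideal.span { d : R | ∃ (r : Fin 2 → Fin p) (c : Fin 2 → Fin q),
    Function.Injective r ∧ Function.Injective c ∧ d = (Φ.submatrix r c).det }


namespace S9

/-- Sequence regular modulo an ideal. -/
def Reg {R : Type*} [CommRing R] : List R → Ideal R → Prop
  | [], _ => True
  | l :: L, K => (∀ c, l * c ∈ K → c ∈ K) ∧ Reg L (K ⊔ Ideal.span {l})

lemma fa3 {P : Fin 3 → Prop} (h0 : P 0) (h1 : P 1) (h2 : P 2) : ∀ i, P i := by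
  intro i; match i with
  | 0 => exact h0
  | 1 => exact h1
  | 2 => exact h2

lemma fa6 {P : Fin 6 → Prop} (h0 : P 0) (h1 : P 1) (h2 : P 2) (h3 : P 3) (h4 : P 4) (h5 : P 5) :
    ∀ i, P i := by
  intro i; match i with
  | 0 => exact h0
  | 1 => exact h1
  | 2 => exact h2
  | 3 => exact h3
  | 4 => exact h4
  | 5 => exact h5

lemma fa8 {P : Fin 8 → Prop} (h0 : P 0) (h1 : P 1) (h2 : P 2) (h3 : P 3) (h4 : P 4) (h5 : P 5)
    (h6 : P 6) (h7 : P 7) : ∀ i, P i := by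
  intro i; match i with
  | 0 => exact h0
  | 1 => exact h1
  | 2 => exact h2
  | 3 => exact h3
  | 4 => exact h4
  | 5 => exact h5
  | 6 => exact h6
  | 7 => exact h7

section EN
variable {R : Type*} [CommRing R] (a b : Fin 4 → R)

def d1 : (Fin 6 → R) →ₗ[R] R where
  toFun u := (a 0*b 1 - a 1*b 0)*u 0 + (a 0*b 2 - a 2*b 0)*u 1 + (a 0*b 3 - a 3*b 0)*u 2
    + (a 1*b 2 - a 2*b 1)*u 3 + (a 1*b 3 - a 3*b 1)*u 4 + (a 2*b 3 - a 3*b 2)*u 5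
  map_add' u v := by simp only [Pi.add_apply]; ring
  map_smul' c u := by simp only [Pi.smul_apply, smul_eq_mul, RingHom.id_apply]; ring

def d2 : (Fin 8 → R) →ₗ[R] (Fin 6 → R) where
  toFun u := ![
    a 3 * u 2 + a 2 * u 3 + b 3 * u 6 + b 2 * u 7,
    a 3 * u 1 - a 1 * u 3 + b 3 * u 5 - b 1 * u 7,
    -a 2 * u 1 - a 1 * u 2 - b 2 * u 5 - b 1 * u 6,
    a 3 * u 0 + a 0 * u 3 + b 3 * u 4 + b 0 * u 7,
    -a 2 * u 0 + a 0 * u 2 - b 2 * u 4 + b 0 * u 6,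
    a 1 * u 0 + a 0 * u 1 + b 1 * u 4 + b 0 * u 5]
  map_add' u v := by
    funext i; revert i
    apply fa6 <;> simp only [Pi.add_apply, Matrix.cons_val] <;> ring
  map_smul' c u := by
    funext i; revert i
    apply fa6 <;> simp only [Pi.smul_apply, smul_eq_mul, RingHom.id_apply, Matrix.cons_val] <;> ring

def d3 : (Fin 3 → R) →ₗ[R] (Fin 8 → R) where
  toFun u := ![
    a 0 * u 0 + b 0 * u 1, -(a 1 * u 0 + b 1 * u 1), a 2 * u 0 + b 2 * u 1, -(a 3 * u 0 + b 3 * u 1),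
    a 0 * u 1 + b 0 * u 2, -(a 1 * u 1 + b 1 * u 2), a 2 * u 1 + b 2 * u 2, -(a 3 * u 1 + b 3 * u 2)]
  map_add' u v := by
    funext i; revert i
    apply fa8 <;> simp only [Pi.add_apply, Matrix.cons_val] <;> ring
  map_smul' c u := by
    funext i; revert i
    apply fa8 <;> simp only [Pi.smul_apply, smul_eq_mul, RingHom.id_apply, Matrix.cons_val] <;> ring

/-- `x` acts null-homotopically. -/
def Kill (x : R) : Prop :=
  ∃ (e0 : Fin 6 → R) (s1 : (Fin 6 → R) →ₗ[R] (Fin 8 → R)) (s2 : (Fin 8 → R) →ₗ[R] (Fin 3 → R)),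
    (∀ u, x • u = d2 a b (s1 u) + d1 a b u • e0) ∧
    (∀ u, x • u = d3 a b (s2 u) + s1 (d2 a b u)) ∧
    (∀ u, x • u = s2 (d3 a b u))

set_option maxHeartbeats 2000000 in
lemma kill01 : Kill a b (a 0 * b 1 - a 1 * b 0) := by
  refine ⟨![1,0,0,0,0,0],
    { toFun := fun u => ![
      0,
      0,
      b 0 * u 2 + b 1 * u 4 + b 2 * u 5,
      b 0 * u 1 + b 1 * u 3 - b 3 * u 5,
      a 0 * u 5,
      -a 1 * u 5,
      -a 0 * u 2 - a 1 * u 4,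
      -a 0 * u 1 - a 1 * u 3]
      map_add' u v := by
        funext i; revert i
        apply fa8 <;> simp only [Pi.add_apply, Matrix.cons_val] <;> ring
      map_smul' c u := by
        funext i; revert i
        apply fa8 <;> simp only [Pi.smul_apply, smul_eq_mul, RingHom.id_apply, Matrix.cons_val] <;> ring },
    { toFun := fun u => ![
      b 1 * u 0 + b 0 * u 1,
      -a 1 * u 0 - a 0 * u 1,
      -a 1 * u 4 - a 0 * u 5]
      map_add' u v := by
        funext i; revert i
        apply fa3 <;> simp only [Pi.add_apply, Matrix.cons_val] <;> ring
      map_smul' c u := by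
        funext i; revert i
        apply fa3 <;> simp only [Pi.smul_apply, smul_eq_mul, RingHom.id_apply, Matrix.cons_val] <;> ring }, fun u => ?_, fun u => ?_, fun u => ?_⟩
  · funext i; revert i
    apply fa6 <;> simp only [d1, d2, d3, LinearMap.coe_mk, AddHom.coe_mk, Pi.add_apply,
      Pi.smul_apply, smul_eq_mul, Matrix.cons_val] <;> ring
  · funext i; revert i
    apply fa8 <;> simp only [d1, d2, d3, LinearMap.coe_mk, AddHom.coe_mk, Pi.add_apply,
      Pi.smul_apply, smul_eq_mul, Matrix.cons_val] <;> ring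
  · funext i; revert i
    apply fa3 <;> simp only [d1, d2, d3, LinearMap.coe_mk, AddHom.coe_mk, Pi.add_apply,
      Pi.smul_apply, smul_eq_mul, Matrix.cons_val] <;> ring

set_option maxHeartbeats 2000000 in
lemma kill02 : Kill a b (a 0 * b 2 - a 2 * b 0) := by
  refine ⟨![0,1,0,0,0,0],
    { toFun := fun u => ![
      0,
      b 0 * u 2 + b 1 * u 4 + b 2 * u 5,
      0,
      -b 0 * u 0 + b 2 * u 3 + b 3 * u 4,
      -a 0 * u 4,
      -a 0 * u 2 - a 2 * u 5,
      -a 2 * u 4,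
      a 0 * u 0 - a 2 * u 3]
      map_add' u v := by
        funext i; revert i
        apply fa8 <;> simp only [Pi.add_apply, Matrix.cons_val] <;> ring
      map_smul' c u := by
        funext i; revert i
        apply fa8 <;> simp only [Pi.smul_apply, smul_eq_mul, RingHom.id_apply, Matrix.cons_val] <;> ring },
    { toFun := fun u => ![
      b 2 * u 0 - b 0 * u 2,
      -a 2 * u 0 + a 0 * u 2,
      -a 2 * u 4 + a 0 * u 6]
      map_add' u v := by
        funext i; revert i
        apply fa3 <;> simp only [Pi.add_apply, Matrix.cons_val] <;> ring
      map_smul' c u := by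
        funext i; revert i
        apply fa3 <;> simp only [Pi.smul_apply, smul_eq_mul, RingHom.id_apply, Matrix.cons_val] <;> ring }, fun u => ?_, fun u => ?_, fun u => ?_⟩
  · funext i; revert i
    apply fa6 <;> simp only [d1, d2, d3, LinearMap.coe_mk, AddHom.coe_mk, Pi.add_apply,
      Pi.smul_apply, smul_eq_mul, Matrix.cons_val] <;> ring
  · funext i; revert i
    apply fa8 <;> simp only [d1, d2, d3, LinearMap.coe_mk, AddHom.coe_mk, Pi.add_apply,
      Pi.smul_apply, smul_eq_mul, Matrix.cons_val] <;> ring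
  · funext i; revert i
    apply fa3 <;> simp only [d1, d2, d3, LinearMap.coe_mk, AddHom.coe_mk, Pi.add_apply,
      Pi.smul_apply, smul_eq_mul, Matrix.cons_val] <;> ring

set_option maxHeartbeats 2000000 in
lemma kill03 : Kill a b (a 0 * b 3 - a 3 * b 0) := by
  refine ⟨![0,0,1,0,0,0],
    { toFun := fun u => ![
      0,
      -b 0 * u 1 - b 1 * u 3 + b 3 * u 5,
      -b 0 * u 0 + b 2 * u 3 + b 3 * u 4,
      0,
      a 0 * u 3,
      a 0 * u 1 - a 3 * u 5,
      a 0 * u 0 - a 3 * u 4,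
      -a 3 * u 3]
      map_add' u v := by
        funext i; revert i
        apply fa8 <;> simp only [Pi.add_apply, Matrix.cons_val] <;> ring
      map_smul' c u := by
        funext i; revert i
        apply fa8 <;> simp only [Pi.smul_apply, smul_eq_mul, RingHom.id_apply, Matrix.cons_val] <;> ring },
    { toFun := fun u => ![
      b 3 * u 0 + b 0 * u 3,
      -a 3 * u 0 - a 0 * u 3,
      -a 3 * u 4 - a 0 * u 7]
      map_add' u v := by
        funext i; revert i
        apply fa3 <;> simp only [Pi.add_apply, Matrix.cons_val] <;> ring
      map_smul' c u := by
        funext i; revert i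
        apply fa3 <;> simp only [Pi.smul_apply, smul_eq_mul, RingHom.id_apply, Matrix.cons_val] <;> ring }, fun u => ?_, fun u => ?_, fun u => ?_⟩
  · funext i; revert i
    apply fa6 <;> simp only [d1, d2, d3, LinearMap.coe_mk, AddHom.coe_mk, Pi.add_apply,
      Pi.smul_apply, smul_eq_mul, Matrix.cons_val] <;> ring
  · funext i; revert i
    apply fa8 <;> simp only [d1, d2, d3, LinearMap.coe_mk, AddHom.coe_mk, Pi.add_apply,
      Pi.smul_apply, smul_eq_mul, Matrix.cons_val] <;> ring
  · funext i; revert i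
    apply fa3 <;> simp only [d1, d2, d3, LinearMap.coe_mk, AddHom.coe_mk, Pi.add_apply,
      Pi.smul_apply, smul_eq_mul, Matrix.cons_val] <;> ring

set_option maxHeartbeats 2000000 in
lemma kill12 : Kill a b (a 1 * b 2 - a 2 * b 1) := by
  refine ⟨![0,0,0,1,0,0],
    { toFun := fun u => ![
      b 0 * u 2 + b 1 * u 4 + b 2 * u 5,
      0,
      0,
      -b 1 * u 0 - b 2 * u 1 - b 3 * u 2,
      -a 1 * u 4 - a 2 * u 5,
      -a 1 * u 2,
      a 2 * u 2,
      a 1 * u 0 + a 2 * u 1]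
      map_add' u v := by
        funext i; revert i
        apply fa8 <;> simp only [Pi.add_apply, Matrix.cons_val] <;> ring
      map_smul' c u := by
        funext i; revert i
        apply fa8 <;> simp only [Pi.smul_apply, smul_eq_mul, RingHom.id_apply, Matrix.cons_val] <;> ring },
    { toFun := fun u => ![
      -b 2 * u 1 - b 1 * u 2,
      a 2 * u 1 + a 1 * u 2,
      a 2 * u 5 + a 1 * u 6]
      map_add' u v := by
        funext i; revert i
        apply fa3 <;> simp only [Pi.add_apply, Matrix.cons_val] <;> ring
      map_smul' c u := by
        funext i; revert i
        apply fa3 <;> simp only [Pi.smul_apply, smul_eq_mul, RingHom.id_apply, Matrix.cons_val] <;> ring }, fun u => ?_, fun u => ?_, fun u => ?_⟩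
  · funext i; revert i
    apply fa6 <;> simp only [d1, d2, d3, LinearMap.coe_mk, AddHom.coe_mk, Pi.add_apply,
      Pi.smul_apply, smul_eq_mul, Matrix.cons_val] <;> ring
  · funext i; revert i
    apply fa8 <;> simp only [d1, d2, d3, LinearMap.coe_mk, AddHom.coe_mk, Pi.add_apply,
      Pi.smul_apply, smul_eq_mul, Matrix.cons_val] <;> ring
  · funext i; revert i
    apply fa3 <;> simp only [d1, d2, d3, LinearMap.coe_mk, AddHom.coe_mk, Pi.add_apply,
      Pi.smul_apply, smul_eq_mul, Matrix.cons_val] <;> ring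

set_option maxHeartbeats 2000000 in
lemma kill13 : Kill a b (a 1 * b 3 - a 3 * b 1) := by
  refine ⟨![0,0,0,0,1,0],
    { toFun := fun u => ![
      -b 0 * u 1 - b 1 * u 3 + b 3 * u 5,
      0,
      -b 1 * u 0 - b 2 * u 1 - b 3 * u 2,
      0,
      a 1 * u 3 - a 3 * u 5,
      a 1 * u 1,
      a 1 * u 0 + a 3 * u 2,
      a 3 * u 1]
      map_add' u v := by
        funext i; revert i
        apply fa8 <;> simp only [Pi.add_apply, Matrix.cons_val] <;> ring
      map_smul' c u := by
        funext i; revert i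
        apply fa8 <;> simp only [Pi.smul_apply, smul_eq_mul, RingHom.id_apply, Matrix.cons_val] <;> ring },
    { toFun := fun u => ![
      -b 3 * u 1 + b 1 * u 3,
      a 3 * u 1 - a 1 * u 3,
      a 3 * u 5 - a 1 * u 7]
      map_add' u v := by
        funext i; revert i
        apply fa3 <;> simp only [Pi.add_apply, Matrix.cons_val] <;> ring
      map_smul' c u := by
        funext i; revert i
        apply fa3 <;> simp only [Pi.smul_apply, smul_eq_mul, RingHom.id_apply, Matrix.cons_val] <;> ring }, fun u => ?_, fun u => ?_, fun u => ?_⟩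
  · funext i; revert i
    apply fa6 <;> simp only [d1, d2, d3, LinearMap.coe_mk, AddHom.coe_mk, Pi.add_apply,
      Pi.smul_apply, smul_eq_mul, Matrix.cons_val] <;> ring
  · funext i; revert i
    apply fa8 <;> simp only [d1, d2, d3, LinearMap.coe_mk, AddHom.coe_mk, Pi.add_apply,
      Pi.smul_apply, smul_eq_mul, Matrix.cons_val] <;> ring
  · funext i; revert i
    apply fa3 <;> simp only [d1, d2, d3, LinearMap.coe_mk, AddHom.coe_mk, Pi.add_apply,
      Pi.smul_apply, smul_eq_mul, Matrix.cons_val] <;> ring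

set_option maxHeartbeats 2000000 in
lemma kill23 : Kill a b (a 2 * b 3 - a 3 * b 2) := by
  refine ⟨![0,0,0,0,0,1],
    { toFun := fun u => ![
      b 0 * u 0 - b 2 * u 3 - b 3 * u 4,
      -b 1 * u 0 - b 2 * u 1 - b 3 * u 2,
      0,
      0,
      a 2 * u 3 + a 3 * u 4,
      a 2 * u 1 + a 3 * u 2,
      a 2 * u 0,
      -a 3 * u 0]
      map_add' u v := by
        funext i; revert i
        apply fa8 <;> simp only [Pi.add_apply, Matrix.cons_val] <;> ring
      map_smul' c u := by
        funext i; revert i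
        apply fa8 <;> simp only [Pi.smul_apply, smul_eq_mul, RingHom.id_apply, Matrix.cons_val] <;> ring },
    { toFun := fun u => ![
      b 3 * u 2 + b 2 * u 3,
      -a 3 * u 2 - a 2 * u 3,
      -a 3 * u 6 - a 2 * u 7]
      map_add' u v := by
        funext i; revert i
        apply fa3 <;> simp only [Pi.add_apply, Matrix.cons_val] <;> ring
      map_smul' c u := by
        funext i; revert i
        apply fa3 <;> simp only [Pi.smul_apply, smul_eq_mul, RingHom.id_apply, Matrix.cons_val] <;> ring }, fun u => ?_, fun u => ?_, fun u => ?_⟩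
  · funext i; revert i
    apply fa6 <;> simp only [d1, d2, d3, LinearMap.coe_mk, AddHom.coe_mk, Pi.add_apply,
      Pi.smul_apply, smul_eq_mul, Matrix.cons_val] <;> ring
  · funext i; revert i
    apply fa8 <;> simp only [d1, d2, d3, LinearMap.coe_mk, AddHom.coe_mk, Pi.add_apply,
      Pi.smul_apply, smul_eq_mul, Matrix.cons_val] <;> ring
  · funext i; revert i
    apply fa3 <;> simp only [d1, d2, d3, LinearMap.coe_mk, AddHom.coe_mk, Pi.add_apply,
      Pi.smul_apply, smul_eq_mul, Matrix.cons_val] <;> ring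

end EN
end S9

namespace S9
section EN2
variable {R : Type*} [CommRing R] {a b : Fin 4 → R}

lemma Kill.add {x y : R} (hx : Kill a b x) (hy : Kill a b y) : Kill a b (x + y) := by
  obtain ⟨e, s, t, h1, h2, h3⟩ := hx
  obtain ⟨e', s', t', h1', h2', h3'⟩ := hy
  refine ⟨e + e', s + s', t + t', fun u => ?_, fun u => ?_, fun u => ?_⟩
  · rw [add_smul, h1, h1', LinearMap.add_apply, map_add, smul_add]; abel
  · rw [add_smul, h2, h2', LinearMap.add_apply, LinearMap.add_apply, map_add]; abel
  · rw [add_smul, h3, h3', LinearMap.add_apply]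

lemma Kill.smul {x : R} (c : R) (hx : Kill a b x) : Kill a b (c * x) := by
  obtain ⟨e, s, t, h1, h2, h3⟩ := hx
  refine ⟨c • e, c • s, c • t, fun u => ?_, fun u => ?_, fun u => ?_⟩
  · rw [mul_smul, h1, LinearMap.smul_apply, map_smul, smul_add, smul_comm c]
  · rw [mul_smul, h2, LinearMap.smul_apply, LinearMap.smul_apply, map_smul, smul_add]
  · rw [mul_smul, h3, LinearMap.smul_apply]

lemma Kill.zero : Kill a b 0 := by simpa using (kill01 a b).smul 0
lemma Kill.neg {x : R} (hx : Kill a b x) : Kill a b (-x) := by simpa using hx.smul (-1)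

lemma kill_lt (i j : Fin 4) (h : i < j) : Kill a b (a i * b j - a j * b i) := by
  fin_cases i <;> fin_cases j <;> first | (exact absurd h (by decide)) | skip
  · exact kill01 a b
  · exact kill02 a b
  · exact kill03 a b
  · exact kill12 a b
  · exact kill13 a b
  · exact kill23 a b

lemma kill_ij (i j : Fin 4) : Kill a b (a i * b j - a j * b i) := by
  rcases lt_trichotomy i j with h | h | h
  · exact kill_lt i j h
  · subst h; simpa using Kill.zero
  · simpa using (kill_lt (a := a) (b := b) j i h).neg

lemma minor_cases (Φ : Matrix (Fin 2) (Fin 4) R) (r : Fin 2 → Fin 2) (c : Fin 2 → Fin 4)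
    (hr : Function.Injective r) :
    (Φ.submatrix r c).det = Φ 0 (c 0) * Φ 1 (c 1) - Φ 0 (c 1) * Φ 1 (c 0) ∨
    (Φ.submatrix r c).det = Φ 0 (c 1) * Φ 1 (c 0) - Φ 0 (c 0) * Φ 1 (c 1) := by
  have h01 : r 0 ≠ r 1 := fun h => by simpa using hr h
  rw [Matrix.det_fin_two]
  simp only [Matrix.submatrix_apply]
  generalize r 0 = p at *
  generalize r 1 = q at *
  fin_cases p <;> fin_cases q <;> simp at h01 ⊢
  right; ring

lemma kill_of_mem (Φ : Matrix (Fin 2) (Fin 4) R) {x : R} (hx : x ∈ minors2 Φ) :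
    Kill (Φ 0) (Φ 1) x := by
  unfold minors2 at hx
  induction hx using Submodule.span_induction with
  | mem x h =>
    obtain ⟨r, c, hr, hc, rfl⟩ := h
    rcases minor_cases Φ r c hr with h | h <;> rw [h] <;> exact kill_ij _ _
  | zero => exact Kill.zero
  | add x y _ _ hx hy => exact hx.add hy
  | smul c x _ hx => exact hx.smul c

lemma lin_mem {n m : ℕ} (f : (Fin n → R) →ₗ[R] (Fin m → R)) {K : Ideal R} {u : Fin n → R}
    (hu : ∀ i, u i ∈ K) (j : Fin m) : f u j ∈ K := by
  rw [LinearMap.pi_apply_eq_sum_univ f u, Finset.sum_apply]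
  exact K.sum_mem fun i _ => by simpa using K.mul_mem_right _ (hu i)

lemma lin_mem1 {n : ℕ} (f : (Fin n → R) →ₗ[R] R) {K : Ideal R} {u : Fin n → R}
    (hu : ∀ i, u i ∈ K) : f u ∈ K := by
  rw [LinearMap.pi_apply_eq_sum_univ f u]
  exact K.sum_mem fun i _ => by simpa using K.mul_mem_right _ (hu i)

/-- splitting membership in `K ⊔ (x)` for vectors -/
lemma split_vec {n : ℕ} {K : Ideal R} {x : R} {u : Fin n → R}
    (hu : ∀ i, u i ∈ K ⊔ Ideal.span {x}) :
    ∃ w : Fin n → R, ∀ i, u i - x * w i ∈ K := by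
  have : ∀ i, ∃ w, u i - x * w ∈ K := fun i => by
    obtain ⟨k, hk, y, hy, h⟩ := Submodule.mem_sup.1 (hu i)
    obtain ⟨w, rfl⟩ := Ideal.mem_span_singleton'.1 hy
    exact ⟨w, by rw [← h]; convert hk using 1; ring⟩
  choose w hw using this
  exact ⟨w, hw⟩

lemma E3 {K : Ideal R} {x : R} (hx : Kill a b x) (h : Reg [x] K) {v : Fin 3 → R}
    (hv : ∀ i, d3 a b v i ∈ K) : ∀ i, v i ∈ K := by
  obtain ⟨e, s, t, h1, h2, h3⟩ := hx
  intro i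
  apply h.1
  have := congrFun (h3 v) i
  simp only [Pi.smul_apply, smul_eq_mul] at this
  rw [this]
  exact lin_mem t hv i

lemma E2 {K : Ideal R} {x y : R} (hx : Kill a b x) (hy : Kill a b y) (h : Reg [x, y] K)
    {u : Fin 8 → R} (hu : ∀ i, d2 a b u i ∈ K) : ∃ v, ∀ i, u i - d3 a b v i ∈ K := by
  obtain ⟨e, s, t, h1, h2, h3⟩ := hx
  have key : ∀ i, x * u i - d3 a b (t u) i ∈ K := fun i => by
    have := congrFun (h2 u) i
    simp only [Pi.smul_apply, smul_eq_mul, Pi.add_apply] at this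
    rw [this, add_sub_cancel_left]
    exact lin_mem s hu i
  obtain ⟨w, hw⟩ := split_vec (K := K) (x := x) (u := t u) (E3 hy h.2 fun i => by
    have := Ideal.sub_mem _ (Ideal.mul_mem_right (u i) _ (Ideal.mem_span_singleton_self x) |>
      fun h => (le_sup_right : _ ≤ K ⊔ Ideal.span {x}) h) ((le_sup_left : K ≤ K ⊔ Ideal.span {x}) (key i))
    simpa using this)
  refine ⟨w, fun i => h.1 _ ?_⟩
  have h4 : d3 a b (t u - x • w) i ∈ K := lin_mem (d3 a b) (fun i => by simpa using hw i) i
  rw [map_sub, map_smul] at h4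
  have := K.add_mem (key i) h4
  simp only [Pi.sub_apply, Pi.smul_apply, smul_eq_mul] at this
  convert this using 1; ring

lemma E1 {K : Ideal R} {x y z : R} (hx : Kill a b x) (hy : Kill a b y) (hz : Kill a b z)
    (h : Reg [x, y, z] K)
    {u : Fin 6 → R} (hu : d1 a b u ∈ K) : ∃ v, ∀ i, u i - d2 a b v i ∈ K := by
  obtain ⟨e, s, t, h1, h2, h3⟩ := hx
  have key : ∀ i, x * u i - d2 a b (s u) i ∈ K := fun i => by
    have := congrFun (h1 u) i
    simp only [Pi.smul_apply, smul_eq_mul, Pi.add_apply] at this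
    rw [this, add_sub_cancel_left]
    exact K.mul_mem_right _ hu
  obtain ⟨g, hg⟩ := E2 hy hz h.2 (u := s u) fun i => by
    have := Ideal.sub_mem _ (Ideal.mul_mem_right (u i) _ (Ideal.mem_span_singleton_self x) |>
      fun h => (le_sup_right : _ ≤ K ⊔ Ideal.span {x}) h) ((le_sup_left : K ≤ K ⊔ Ideal.span {x}) (key i))
    simpa using this
  obtain ⟨w, hw⟩ := split_vec (K := K) (x := x) (u := s u - d3 a b g) (fun i => by simpa using hg i)
  refine ⟨w, fun i => h.1 _ ?_⟩
  have h4 : d2 a b (s u - d3 a b g - x • w) i ∈ K :=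
    lin_mem (d2 a b) (fun i => by simpa using hw i) i
  have h5 : d2 a b (d3 a b g) = 0 := by
    funext i; revert i
    apply fa6 <;> simp only [d2, d3, LinearMap.coe_mk, AddHom.coe_mk, Pi.zero_apply,
      Matrix.cons_val] <;> ring
  rw [map_sub, map_sub, map_smul, h5, sub_zero] at h4
  have := K.add_mem (key i) h4
  simp only [Pi.sub_apply, Pi.smul_apply, smul_eq_mul] at this
  convert this using 1; ring

lemma d1_d2 (u : Fin 8 → R) : d1 a b (d2 a b u) = 0 := by
  simp only [d1, d2, LinearMap.coe_mk, AddHom.coe_mk, Matrix.cons_val]; ring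

lemma d2_d3 (u : Fin 3 → R) : d2 a b (d3 a b u) = 0 := by
  funext i; revert i
  apply fa6 <;> simp only [d2, d3, LinearMap.coe_mk, AddHom.coe_mk, Pi.zero_apply,
      Matrix.cons_val] <;> ring

lemma d2_mem {K : Ideal R} (ha : ∀ i, a i ∈ K) (hb : ∀ i, b i ∈ K) (u : Fin 8 → R) (i : Fin 6) :
    d2 a b u i ∈ K := by
  rw [← Ideal.Quotient.eq_zero_iff_mem]
  have ha' := fun i => Ideal.Quotient.eq_zero_iff_mem.2 (ha i)
  have hb' := fun i => Ideal.Quotient.eq_zero_iff_mem.2 (hb i)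
  revert i
  apply fa6 <;> simp [d2, Matrix.cons_val, ha', hb']

lemma d3_mem {K : Ideal R} (ha : ∀ i, a i ∈ K) (hb : ∀ i, b i ∈ K) (u : Fin 3 → R) (i : Fin 8) :
    d3 a b u i ∈ K := by
  rw [← Ideal.Quotient.eq_zero_iff_mem]
  have ha' := fun i => Ideal.Quotient.eq_zero_iff_mem.2 (ha i)
  have hb' := fun i => Ideal.Quotient.eq_zero_iff_mem.2 (hb i)
  revert i
  apply fa8 <;> simp [d3, Matrix.cons_val, ha', hb']

lemma minor_mem (Φ : Matrix (Fin 2) (Fin 4) R) {i j : Fin 4} (h : i ≠ j) :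
    Φ 0 i * Φ 1 j - Φ 0 j * Φ 1 i ∈ minors2 Φ := by
  apply Ideal.subset_span
  refine ⟨id, ![i, j], Function.injective_id, ?_, ?_⟩
  · intro p q hpq
    fin_cases p <;> fin_cases q <;> simp_all
  · rw [Matrix.det_fin_two]; simp

lemma range_d1 (Φ : Matrix (Fin 2) (Fin 4) R) : LinearMap.range (d1 (Φ 0) (Φ 1)) = minors2 Φ := by
  apply le_antisymm
  · rintro _ ⟨u, rfl⟩
    simp only [d1, LinearMap.coe_mk, AddHom.coe_mk]
    have m := fun i j h => minor_mem Φ (i := i) (j := j) h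
    exact Ideal.add_mem _ (Ideal.add_mem _ (Ideal.add_mem _ (Ideal.add_mem _ (Ideal.add_mem _
      (Ideal.mul_mem_right _ _ (m _ _ (by decide))) (Ideal.mul_mem_right _ _ (m _ _ (by decide))))
      (Ideal.mul_mem_right _ _ (m _ _ (by decide)))) (Ideal.mul_mem_right _ _ (m _ _ (by decide))))
      (Ideal.mul_mem_right _ _ (m _ _ (by decide)))) (Ideal.mul_mem_right _ _ (m _ _ (by decide)))
  · have hlt : ∀ i j : Fin 4, i < j →
        Φ 0 i * Φ 1 j - Φ 0 j * Φ 1 i ∈ LinearMap.range (d1 (Φ 0) (Φ 1)) := by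
      intro i j h
      have : ∃ n : Fin 6, d1 (Φ 0) (Φ 1) (Pi.single n 1) = Φ 0 i * Φ 1 j - Φ 0 j * Φ 1 i := by
        fin_cases i <;> fin_cases j <;> first | (exact absurd h (by decide)) | skip
        · exact ⟨0, by simp [d1]⟩
        · exact ⟨1, by simp [d1]⟩
        · exact ⟨2, by simp [d1]⟩
        · exact ⟨3, by simp [d1]⟩
        · exact ⟨4, by simp [d1]⟩
        · exact ⟨5, by simp [d1]⟩
      obtain ⟨n, hn⟩ := this
      exact ⟨_, hn⟩
    have hall : ∀ i j : Fin 4,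
        Φ 0 i * Φ 1 j - Φ 0 j * Φ 1 i ∈ LinearMap.range (d1 (Φ 0) (Φ 1)) := by
      intro i j
      rcases lt_trichotomy i j with h | h | h
      · exact hlt i j h
      · subst h; simp
      · rw [← neg_sub]; exact Submodule.neg_mem _ (hlt j i h)
    unfold minors2
    rw [Ideal.span_le]
    rintro _ ⟨r, c, hr, hc, rfl⟩
    rcases minor_cases Φ r c hr with h | h <;> rw [h] <;> exact hall _ _

end EN2

lemma reg_append {R : Type*} [CommRing R] (L M : List R) (K : Ideal R) :
    Reg (L ++ M) K ↔ Reg L K ∧ Reg M (K ⊔ Ideal.ofList L) := by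
  induction L generalizing K with
  | nil => simp [Reg]
  | cons l L ih => simp [Reg, ih, and_assoc, sup_assoc]

lemma reg_of_weak {R : Type*} [CommRing R] {L : List R}
    (h : RingTheory.Sequence.IsWeaklyRegular R L) : Reg L ⊥ := by
  induction L using List.reverseRecOn with
  | nil => trivial
  | append_singleton L l ih =>
    rw [RingTheory.Sequence.isWeaklyRegular_append_iff] at h
    rw [reg_append]
    refine ⟨ih h.1, fun c hc => ?_, trivial⟩
    have h2 := (RingTheory.Sequence.isWeaklyRegular_singleton_iff _ _).1 h.2
    rw [bot_sup_eq] at hc ⊢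
    rw [isSMulRegular_iff_right_eq_zero_of_smul] at h2
    have := h2 (Submodule.Quotient.mk c) (by
      rw [← Submodule.Quotient.mk_smul, Submodule.Quotient.mk_eq_zero]
      simpa using hc)
    rw [Submodule.Quotient.mk_eq_zero] at this
    simpa using this

lemma weak_of_reg {R : Type*} [CommRing R] {L : List R} (h : Reg L ⊥) :
    RingTheory.Sequence.IsWeaklyRegular R L := by
  induction L using List.reverseRecOn with
  | nil => simp
  | append_singleton L l ih =>
    rw [RingTheory.Sequence.isWeaklyRegular_append_iff]
    rw [reg_append] at h
    refine ⟨ih h.1, (RingTheory.Sequence.isWeaklyRegular_singleton_iff _ _).2 ?_⟩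
    rw [isSMulRegular_iff_right_eq_zero_of_smul]
    intro x hx
    obtain ⟨c, rfl⟩ := Submodule.Quotient.mk_surjective _ x
    rw [← Submodule.Quotient.mk_smul, Submodule.Quotient.mk_eq_zero] at hx
    rw [Submodule.Quotient.mk_eq_zero]
    have := h.2.1 c
    rw [bot_sup_eq] at this
    simpa using this (by simpa using hx)

lemma mem_smul_top {R : Type*} [CommRing R] {n : ℕ} {K : Ideal R} {u : Fin n → R}
    (h : ∀ i, u i ∈ K) : u ∈ K • (⊤ : Submodule R (Fin n → R)) := by
  rw [pi_eq_sum_univ u]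
  exact Submodule.sum_mem _ fun i _ => Submodule.smul_mem_smul (h i) trivial

/-- first part -/
lemma part1 {R : Type*} [CommRing R] [IsLocalRing R] (Φ : Matrix (Fin 2) (Fin 4) R)
    (hΦ : ∀ i j, Φ i j ∈ IsLocalRing.maximalIdeal R) {x y z : R} (hx : x ∈ minors2 Φ)
    (hy : y ∈ minors2 Φ) (hz : z ∈ minors2 Φ)
    (h : RingTheory.Sequence.IsRegular R [x, y, z]) :
    IsGrade3PerfectOfFormat (minors2 Φ) 6 3 := by
  have hr := reg_of_weak h.toIsWeaklyRegular
  have kx := kill_of_mem Φ hx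
  have ky := kill_of_mem Φ hy
  have kz := kill_of_mem Φ hz
  refine ⟨⟨x, y, z, hx, hy, hz, h⟩, by norm_num, by norm_num, d1 (Φ 0) (Φ 1), d2 (Φ 0) (Φ 1),
    d3 (Φ 0) (Φ 1), range_d1 Φ, ?_, ?_, ?_, ?_, ?_, ?_⟩
  · apply le_antisymm
    · rintro _ ⟨u, rfl⟩; exact d1_d2 u
    · intro u hu
      obtain ⟨v, hv⟩ := E1 kx ky kz hr (u := u) (by simpa using hu)
      exact ⟨v, funext fun i => (sub_eq_zero.1 (by simpa using hv i)).symm⟩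
  · apply le_antisymm
    · rintro _ ⟨u, rfl⟩; exact d2_d3 u
    · intro u hu
      obtain ⟨v, hv⟩ := E2 kx ky ⟨hr.1, hr.2.1, trivial⟩ (u := u)
        (fun i => by simpa using congrFun hu i)
      exact ⟨v, funext fun i => (sub_eq_zero.1 (by simpa using hv i)).symm⟩
  · rw [LinearMap.ker_eq_bot']
    intro v hv
    exact funext fun i => by simpa using E3 kx ⟨hr.1, trivial⟩ (v := v) (fun i => by simp [hv]) i
  · unfold minors2
    rw [Ideal.span_le]
    rintro _ ⟨r, c, hr, hc, rfl⟩
    rcases minor_cases Φ r c hr with h | h <;> rw [h] <;>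
    exact Ideal.sub_mem _ (Ideal.mul_mem_right _ _ (hΦ _ _)) (Ideal.mul_mem_right _ _ (hΦ _ _))
  · rintro _ ⟨u, rfl⟩
    exact mem_smul_top (d2_mem (hΦ 0) (hΦ 1) u)
  · rintro _ ⟨u, rfl⟩
    exact mem_smul_top (d3_mem (hΦ 0) (hΦ 1) u)
end S9

set_option linter.unusedSectionVars false
namespace S9
section Perm
variable {R : Type*} [CommRing R]

lemma mem_sup_span {K : Ideal R} {x c : R} : c ∈ K ⊔ Ideal.span {x} ↔ ∃ w, c - x * w ∈ K := by
  constructor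
  · intro h
    obtain ⟨k, hk, y, hy, h⟩ := Submodule.mem_sup.1 h
    obtain ⟨w, rfl⟩ := Ideal.mem_span_singleton'.1 hy
    exact ⟨w, by rw [← h]; convert hk using 1; ring⟩
  · rintro ⟨w, hw⟩
    have := Ideal.add_mem _ ((le_sup_left : K ≤ K ⊔ Ideal.span {x}) hw)
      ((le_sup_right : Ideal.span {x} ≤ K ⊔ Ideal.span {x})
        (Ideal.mul_mem_right w _ (Ideal.mem_span_singleton_self x)))
    simpa using this

lemma sub_self_mem {K : Ideal R} {x c w : R} (h : c - x * w ∈ K) : c ∈ K ⊔ Ideal.span {x} :=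
  mem_sup_span.2 ⟨w, h⟩

variable [IsLocalRing R] [IsNoetherianRing R]
local notation "𝔫" => IsLocalRing.maximalIdeal R

lemma reg_swap {K : Ideal R} {x y : R} {L : List R} (hx : x ∈ 𝔫)
    (h : Reg (x :: y :: L) K) : Reg (y :: x :: L) K := by
  obtain ⟨h1, h2, h3⟩ := h
  refine ⟨?_, ?_, ?_⟩
  · -- Nakayama
    let A : Ideal R := Submodule.colon K ({y} : Set R)
    have hA : ∀ c, c ∈ A ↔ y * c ∈ K := fun c => by
      simp [A, Submodule.mem_colon_singleton, mul_comm]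
    have : A ≤ K := by
      apply Submodule.le_of_le_smul_of_le_jacobson_bot (I := Ideal.span {x}) (IsNoetherian.noetherian A)
      · rw [IsLocalRing.jacobson_eq_maximalIdeal ⊥ bot_ne_top]
        rwa [Ideal.span_singleton_le_iff_mem]
      · intro c hc
        rw [hA] at hc
        obtain ⟨w, hw⟩ := mem_sup_span.1 (h2 c (Ideal.mem_sup_left hc))
        have hwA : w ∈ A := by
          rw [hA]; apply h1
          have := K.sub_mem hc (K.mul_mem_left y hw)
          convert this using 1; ring
        have : c = (c - x * w) + x • w := by simp
        rw [this]
        exact Submodule.add_mem_sup hw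
          (Submodule.smul_mem_smul (Ideal.mem_span_singleton_self x) hwA)
    exact fun c hc => this ((hA c).2 hc)
  · intro c hc
    obtain ⟨r, hr⟩ := mem_sup_span.1 hc
    have : y * r ∈ K ⊔ Ideal.span {x} := mem_sup_span.2 ⟨c, by
      convert K.neg_mem hr using 1; ring⟩
    obtain ⟨w, hw⟩ := mem_sup_span.1 (h2 r this)
    refine mem_sup_span.2 ⟨w, h1 _ ?_⟩
    convert K.add_mem hr (K.mul_mem_left y hw) using 1; ring
  · rwa [sup_right_comm] at h3

lemma reg_rot {K : Ideal R} {x : R} {L : List R} (hx : x ∈ 𝔫) (h : Reg (x :: L) K) :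
    Reg (L ++ [x]) K := by
  induction L generalizing K with
  | nil => exact h
  | cons y L ih =>
    have := reg_swap hx h
    exact ⟨this.1, ih this.2⟩

lemma reg_rot' {K : Ideal R} {x : R} {L : List R} (hL : ∀ y ∈ L, y ∈ 𝔫) (h : Reg (L ++ [x]) K) :
    Reg (x :: L) K := by
  induction L generalizing K with
  | nil => exact h
  | cons y L ih =>
    exact reg_swap (hL y (by simp)) ⟨h.1, ih (fun z hz => hL z (by simp [hz])) h.2⟩

/-- regular elements via associated primes -/
lemma reg_of_notMem {K : Ideal R} {x : R}
    (h : ∀ P ∈ associatedPrimes R (R ⧸ K), x ∉ P) : ∀ c, x * c ∈ K → c ∈ K := by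
  intro c hc
  by_contra hcK
  have : x ∈ ⋃ p ∈ associatedPrimes R (R ⧸ K), (p : Set R) := by
    rw [biUnion_associatedPrimes_eq_zero_divisors]
    refine ⟨Ideal.Quotient.mk K c, ?_, ?_⟩
    · rwa [Ne, Ideal.Quotient.eq_zero_iff_mem]
    · rw [Algebra.smul_def, Ideal.Quotient.algebraMap_eq, ← map_mul,
        Ideal.Quotient.eq_zero_iff_mem]; exact hc
  simp only [Set.mem_iUnion] at this
  obtain ⟨p, hp, hx⟩ := this
  exact h p hp hx

/-- socle condition -/
def P0 (K : Ideal R) : Prop := ∀ u, (∀ r ∈ 𝔫, r * u ∈ K) → u ∈ K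
def P1 (K : Ideal R) : Prop := ∀ u v, (∀ r ∈ 𝔫, r * u ∈ K) → (∀ r ∈ 𝔫, r * v ∈ K) → u ∉ K →
  ∃ r, v - r * u ∈ K

lemma not_max_of_P0 {K : Ideal R} (h : P0 K) {P : Ideal R}
    (hP : P ∈ associatedPrimes R (R ⧸ K)) : ¬ 𝔫 ≤ P := by
  intro hle
  obtain ⟨hprime, x, hx⟩ := isAssociatedPrime_iff.1 (AssociatedPrimes.mem_iff.1 hP)
  obtain ⟨u, rfl⟩ := Ideal.Quotient.mk_surjective x
  have hmem : ∀ r, r ∈ P ↔ r * u ∈ K := fun r => by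
    rw [hx, Submodule.mem_colon_singleton, Submodule.mem_bot, Algebra.smul_def,
      Ideal.Quotient.algebraMap_eq, ← map_mul, Ideal.Quotient.eq_zero_iff_mem]
  apply hprime.ne_top
  rw [Ideal.eq_top_iff_one, hmem, one_mul]
  exact h u fun r hr => (hmem r).1 (hle hr)

lemma P0_of_reg {K : Ideal R} {x : R} (hx : x ∈ 𝔫) (h : ∀ c, x * c ∈ K → c ∈ K) : P0 K :=
  fun u hu => h u (hu x hx)

/-- common regular element -/
lemma exists_common {A B : Ideal R} (hA : P0 A) (hB : P0 B) :
    ∃ w ∈ 𝔫, (∀ c, w * c ∈ A → c ∈ A) ∧ (∀ c, w * c ∈ B → c ∈ B) := by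
  have hfin : (associatedPrimes R (R ⧸ A) ∪ associatedPrimes R (R ⧸ B)).Finite :=
    (associatedPrimes.finite R _).union (associatedPrimes.finite R _)
  have : ¬ ((𝔫 : Set R) ⊆ ⋃ p ∈ (hfin.toFinset : Set (Ideal R)), (p : Set R)) := by
    rw [Ideal.subset_union_prime ⊥ ⊥]
    · rintro ⟨P, hP, hle⟩
      rw [Set.Finite.mem_toFinset] at hP
      rcases hP with hP | hP
      · exact not_max_of_P0 hA hP hle
      · exact not_max_of_P0 hB hP hle
    · intro P hP _ _
      rw [Set.Finite.mem_toFinset] at hP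
      rcases hP with hP | hP <;> exact IsAssociatedPrime.isPrime hP
  rw [Set.not_subset] at this
  obtain ⟨w, hw, hw'⟩ := this
  simp only [Set.mem_iUnion, not_exists, Set.Finite.coe_toFinset] at hw'
  exact ⟨w, hw, reg_of_notMem fun P hP => hw' P (Or.inl hP),
    reg_of_notMem fun P hP => hw' P (Or.inr hP)⟩

lemma soc_move {K : Ideal R} {y z : R} (hy : y ∈ 𝔫)
    (rz : ∀ c, z * c ∈ K → c ∈ K) {u' : R}
    (hu : ∀ r ∈ 𝔫, r * u' ∈ K ⊔ Ideal.span {z}) :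
    ∃ u, y * u' - z * u ∈ K ∧ ∀ r ∈ 𝔫, r * u ∈ K ⊔ Ideal.span {y} := by
  obtain ⟨u, hu1⟩ := mem_sup_span.1 (hu y hy)
  refine ⟨u, hu1, fun r hr => ?_⟩
  obtain ⟨w, hw⟩ := mem_sup_span.1 (hu r hr)
  refine mem_sup_span.2 ⟨w, rz _ ?_⟩
  convert K.sub_mem (K.mul_mem_left y hw) (K.mul_mem_left r hu1) using 1; ring

lemma P0_move {K : Ideal R} {y z : R} (hy : y ∈ 𝔫)
    (ry : ∀ c, y * c ∈ K → c ∈ K) (rz : ∀ c, z * c ∈ K → c ∈ K)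
    (h : P0 (K ⊔ Ideal.span {y})) : P0 (K ⊔ Ideal.span {z}) := by
  intro u' hu'
  obtain ⟨u, h1, h2⟩ := soc_move hy rz hu'
  obtain ⟨w, hw⟩ := mem_sup_span.1 (h u h2)
  refine mem_sup_span.2 ⟨w, ry _ ?_⟩
  convert K.add_mem h1 (K.mul_mem_left z hw) using 1; ring

lemma P1_move {K : Ideal R} {y z : R} (hy : y ∈ 𝔫)
    (ry : ∀ c, y * c ∈ K → c ∈ K) (rz : ∀ c, z * c ∈ K → c ∈ K)
    (h : P1 (K ⊔ Ideal.span {y})) : P1 (K ⊔ Ideal.span {z}) := by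
  intro u' v' hu' hv' hne
  obtain ⟨u, h1, h2⟩ := soc_move hy rz hu'
  obtain ⟨v, k1, k2⟩ := soc_move hy rz hv'
  obtain ⟨r, hr⟩ := h u v h2 k2 (fun hu => hne (by
    obtain ⟨w, hw⟩ := mem_sup_span.1 hu
    refine mem_sup_span.2 ⟨w, ry _ ?_⟩
    convert K.add_mem h1 (K.mul_mem_left z hw) using 1; ring))
  obtain ⟨w, hw⟩ := mem_sup_span.1 hr
  refine ⟨r, mem_sup_span.2 ⟨w, ry _ ?_⟩⟩
  convert K.add_mem (K.sub_mem k1 (K.mul_mem_left r h1)) (K.mul_mem_left z hw) using 1; ring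

lemma exchange (P : Ideal R → Prop)
    (hP : ∀ (K : Ideal R) (y z : R), y ∈ 𝔫 → z ∈ 𝔫 → (∀ c, y * c ∈ K → c ∈ K) →
      (∀ c, z * c ∈ K → c ∈ K) → P (K ⊔ Ideal.span {y}) → P (K ⊔ Ideal.span {z}))
    (n : ℕ) : ∀ (K : Ideal R) (L L' : List R), L.length = n → L'.length = n →
      (∀ y ∈ L, y ∈ 𝔫) → (∀ y ∈ L', y ∈ 𝔫) → Reg L K → Reg L' K →
      P (K ⊔ Ideal.ofList L) → P (K ⊔ Ideal.ofList L') := by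
  induction n with
  | zero =>
    intro K L L' h h' _ _ _ _ hp
    rw [List.length_eq_zero_iff] at h h'
    subst h; subst h'; exact hp
  | succ n ih =>
    intro K L L' h h' hL hL' hr hr' hp
    obtain ⟨L0, l, rfl⟩ : ∃ L0 l, L = L0 ++ [l] :=
      ⟨L.dropLast, L.getLast (by rintro rfl; simp at h), (List.dropLast_append_getLast _).symm⟩
    obtain ⟨L0', l', rfl⟩ : ∃ L0 l, L' = L0 ++ [l] :=
      ⟨L'.dropLast, L'.getLast (by rintro rfl; simp at h'), (List.dropLast_append_getLast _).symm⟩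
    simp only [List.length_append, List.length_singleton, Nat.add_right_cancel_iff] at h h'
    simp only [List.mem_append, List.mem_singleton] at hL hL'
    have hl := hL l (Or.inr rfl)
    have hl' := hL' l' (Or.inr rfl)
    have hL0 : ∀ y ∈ L0, y ∈ 𝔫 := fun y hy => hL y (Or.inl hy)
    have hL0' : ∀ y ∈ L0', y ∈ 𝔫 := fun y hy => hL' y (Or.inl hy)
    rw [reg_append] at hr hr'
    obtain ⟨w, hw, wA, wB⟩ := exists_common (P0_of_reg hl hr.2.1) (P0_of_reg hl' hr'.2.1)
    rw [Ideal.ofList_append, Ideal.ofList_singleton, ← sup_assoc] at hp ⊢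
    have h1 := hP _ l w hl hw hr.2.1 wA hp
    have r1 : Reg (w :: L0) K := reg_rot' hL0 ((reg_append _ _ _).2 ⟨hr.1, wA, trivial⟩)
    have r1' : Reg (w :: L0') K := reg_rot' hL0' ((reg_append _ _ _).2 ⟨hr'.1, wB, trivial⟩)
    rw [sup_right_comm] at h1
    have h2 := ih _ L0 L0' h h' hL0 hL0' r1.2 r1'.2 h1
    rw [sup_right_comm] at h2
    exact hP _ w l' hw hl' wB hr'.2.1 h2

/-- The abstract Gorenstein package -/
lemma P0_of_length {X : List R} (hX : Reg X ⊥) (hXm : Ideal.ofList X = 𝔫) {L : List R}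
    (hL : Reg L ⊥) (hLm : ∀ y ∈ L, y ∈ 𝔫) (h : L.length < X.length) :
    P0 (Ideal.ofList L) := by
  have hX' : ∀ y ∈ X, y ∈ 𝔫 := fun y hy => hXm ▸ Ideal.subset_span hy
  have e := (List.take_append_drop L.length X)
  have hd : X.drop L.length = X[L.length] :: X.drop (L.length + 1) := List.drop_eq_getElem_cons h
  rw [← e, reg_append, hd] at hX
  have := exchange P0 (fun K y z hy _ => P0_move hy) L.length ⊥ (X.take L.length) L (by simp; omega) rfl
    (fun y hy => hX' y (List.mem_of_mem_take hy)) hLm hX.1 hL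
    (P0_of_reg (hX' _ (List.getElem_mem h)) hX.2.1)
  rwa [bot_sup_eq] at this

lemma P1_of_length {X : List R} (hX : Reg X ⊥) (hXm : Ideal.ofList X = 𝔫) {L : List R}
    (hL : Reg L ⊥) (hLm : ∀ y ∈ L, y ∈ 𝔫) (h : L.length = X.length) :
    P1 (Ideal.ofList L) := by
  have hX' : ∀ y ∈ X, y ∈ 𝔫 := fun y hy => hXm ▸ Ideal.subset_span hy
  have := exchange P1 (fun K y z hy _ => P1_move hy) L.length ⊥ X L h.symm rfl
    hX' hLm hX hL (by
      rw [hXm, bot_sup_eq]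
      intro u v _ _ hu
      rw [IsLocalRing.mem_maximalIdeal, mem_nonunits_iff, not_not] at hu
      obtain ⟨u, rfl⟩ := hu
      exact ⟨v * ↑u⁻¹, by simp⟩)
  rwa [bot_sup_eq] at this

lemma artin_of_length {X : List R} (hX : Reg X ⊥) (hXm : Ideal.ofList X = 𝔫) {L : List R}
    (hL : Reg L ⊥) (hLm : ∀ y ∈ L, y ∈ 𝔫) (h : L.length = X.length) :
    ∃ n, 𝔫 ^ n ≤ Ideal.ofList L := by
  have hX' : ∀ y ∈ X, y ∈ 𝔫 := fun y hy => hXm ▸ Ideal.subset_span hy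
  have r1 : RingTheory.Sequence.IsRegular R X :=
    (IsLocalRing.isRegular_iff_isWeaklyRegular_of_subset_maximalIdeal hX').2 (weak_of_reg hX)
  have r2 : RingTheory.Sequence.IsRegular R L :=
    (IsLocalRing.isRegular_iff_isWeaklyRegular_of_subset_maximalIdeal hLm).2 (weak_of_reg hL)
  have e1 := ringKrullDim_add_length_eq_ringKrullDim_of_isRegular X r1
  have e2 := ringKrullDim_add_length_eq_ringKrullDim_of_isRegular L r2
  have h0 : ringKrullDim (R ⧸ Ideal.ofList X) = 0 := by
    rw [hXm]
    let _ := Ideal.Quotient.field (IsLocalRing.maximalIdeal R)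
    exact ringKrullDim_eq_zero_of_field (R ⧸ IsLocalRing.maximalIdeal R)
  rw [h0, ← e2, zero_add, h] at e1
  have hk : Ring.KrullDimLE 0 (R ⧸ Ideal.ofList L) := by
    rw [Ring.krullDimLE_iff]
    generalize ringKrullDim (R ⧸ Ideal.ofList L) = d at e1
    cases d with
    | bot => simp
    | coe d =>
      cases d with
      | top =>
        exfalso
        have : ((X.length : ℕ∞) : WithBot ℕ∞) = (((⊤ : ℕ∞) + (X.length : ℕ∞) : ℕ∞) : WithBot ℕ∞) := e1
        rw [WithBot.coe_inj, top_add] at this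
        exact ENat.natCast_ne_top _ this
      | coe d =>
        have : ((X.length : ℕ∞) : WithBot ℕ∞) = (((d + X.length : ℕ) : ℕ∞) : WithBot ℕ∞) := by
          rw [Nat.cast_add]; exact e1
        rw [WithBot.coe_inj, Nat.cast_inj] at this
        have : d = 0 := by omega
        subst this; simp
  rw [Ideal.krullDimLE_zero_quotient_iff_forall_minimalPrimes_isMaximal] at hk
  have hrad : IsLocalRing.maximalIdeal R ≤ (Ideal.ofList L).radical := by
    rw [← Ideal.sInf_minimalPrimes]
    exact le_sInf fun P hP => (IsLocalRing.eq_maximalIdeal (hk P hP)).ge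
  obtain ⟨n, hn⟩ := Ideal.exists_radical_pow_le_of_fg (Ideal.ofList L) (IsNoetherian.noetherian _)
  exact ⟨n, (Ideal.pow_right_mono hrad n).trans hn⟩
end Perm
end S9

namespace S9
section Base
universe u
variable {R : Type u} [CommRing R]

lemma len_ker_range {M P : Type*} [AddCommGroup M] [Module R M] [AddCommGroup P] [Module R P]
    (g : M →ₗ[R] P) : Module.length R M =
      Module.length R (LinearMap.ker g) + Module.length R (LinearMap.range g) :=
  Module.length_eq_add_of_exact (LinearMap.ker g).subtype g.rangeRestrict
    (Submodule.subtype_injective _) g.surjective_rangeRestrict (by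
      have h := LinearMap.exact_subtype_ker_map g
      intro x
      rw [← h x]
      simp [Subtype.ext_iff])

/-- Hom into `S` vanishing on a submodule -/
lemma len_ker_lcomp {M N S : Type*} [AddCommGroup M] [Module R M] [AddCommGroup N] [Module R N]
    [AddCommGroup S] [Module R S] (i : N →ₗ[R] M) :
    Module.length R (LinearMap.ker (LinearMap.lcomp R S i)) ≤
      Module.length R ((M ⧸ LinearMap.range i) →ₗ[R] S) := by
  have hk : ∀ f : LinearMap.ker (LinearMap.lcomp R S i),
      LinearMap.range i ≤ LinearMap.ker (f : M →ₗ[R] S) := by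
    rintro ⟨f, hf⟩ _ ⟨x, rfl⟩
    have := LinearMap.congr_fun (LinearMap.mem_ker.1 hf) x
    simpa using this
  let F : LinearMap.ker (LinearMap.lcomp R S i) →ₗ[R] ((M ⧸ LinearMap.range i) →ₗ[R] S) :=
    { toFun := fun f => (LinearMap.range i).liftQ (f : M →ₗ[R] S) (hk f)
      map_add' := fun f g => by ext x; simp
      map_smul' := fun r f => by ext x; simp }
  refine Module.length_le_of_injective F ?_
  intro f g h
  ext x
  have := LinearMap.congr_fun h (Submodule.Quotient.mk x)
  simpa [F] using this

lemma ext_single {M : Type*} [AddCommGroup M] [Module R M] (A : Ideal R) (f : A →ₗ[R] M) (w : R)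
    (m : M) (H : ∀ r (h : r * w ∈ A), f ⟨r * w, h⟩ = r • m) :
    ∃ g : (A ⊔ Ideal.span {w} : Ideal R) →ₗ[R] M,
      (∀ a (h : a ∈ A), g ⟨a, le_sup_left (a := A) h⟩ = f ⟨a, h⟩) ∧
      g ⟨w, le_sup_right (a := A) (Ideal.mem_span_singleton_self w)⟩ = m := by
  let f1 : R →ₗ.[R] M := ⟨A, f⟩
  have hz : ∀ r : R, r • w = 0 → (RingHom.id R r) • m = 0 := by
    intro r hr
    have h0 : r * w ∈ A := by rw [← smul_eq_mul, hr]; exact A.zero_mem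
    rw [RingHom.id_apply, ← H r h0]
    have : (⟨r * w, h0⟩ : A) = 0 := Subtype.ext hr
    rw [this, map_zero]
  let f2 : R →ₗ.[R] M := LinearPMap.mkSpanSingleton' w m hz
  have hc : ∀ (x : f1.domain) (y : f2.domain), (x : R) = y → f1 x = f2 y := by
    rintro ⟨x, hx⟩ ⟨y, hy⟩ (rfl : x = y)
    obtain ⟨r, rfl⟩ := Submodule.mem_span_singleton.1 hy
    have := LinearPMap.mkSpanSingleton'_apply w m hz r hy
    change f1 _ = LinearPMap.mkSpanSingleton' w m hz _
    rw [this]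
    exact H r hx
  refine ⟨(f1.sup f2 hc).toFun, fun a ha => ?_, ?_⟩
  · have := LinearPMap.sup_apply hc ⟨a, ha⟩ 0 ⟨a, le_sup_left (a := A) ha⟩ (by simp)
    rw [LinearPMap.map_zero, add_zero] at this
    exact this
  · have hw : w ∈ f2.domain := Ideal.mem_span_singleton_self w
    have := LinearPMap.sup_apply hc 0 ⟨w, hw⟩
      ⟨w, le_sup_right (a := A) (Ideal.mem_span_singleton_self w)⟩ (by simp)
    rw [LinearPMap.map_zero, zero_add] at this
    refine Eq.trans this ?_
    exact LinearPMap.mkSpanSingleton'_apply_self w m hz hw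

variable [IsLocalRing R]
local notation "𝔫" => IsLocalRing.maximalIdeal R

lemma len_hom_simple {K : Ideal R} (h : P1 K) {M : Type*} [AddCommGroup M] [Module R M]
    [hs : IsSimpleModule R M] : Module.length R (M →ₗ[R] (R ⧸ K)) ≤ 1 := by
  have hann : ∀ r ∈ 𝔫, ∀ x : M, r • x = 0 := by
    intro r hr x
    have hm := IsLocalRing.eq_maximalIdeal (IsSimpleModule.annihilator_isMaximal (R := R) (M := M))
    rw [← hm] at hr
    exact Module.mem_annihilator.1 hr x
  have key : ∀ f g : M →ₗ[R] (R ⧸ K), f ≠ 0 → ∃ r : R, r • f = g := by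
    intro f g hf
    obtain ⟨x, hx⟩ : ∃ x, f x ≠ 0 := by
      by_contra! hcon
      exact hf (LinearMap.ext hcon)
    have hx0 : x ≠ 0 := by rintro rfl; simp at hx
    obtain ⟨u, hu⟩ := Ideal.Quotient.mk_surjective (f x)
    obtain ⟨v, hv⟩ := Ideal.Quotient.mk_surjective (g x)
    have soc : ∀ (φ : M →ₗ[R] (R ⧸ K)) (w : R), Ideal.Quotient.mk K w = φ x →
        ∀ r ∈ 𝔫, r * w ∈ K := by
      intro φ w hw r hr
      rw [← Ideal.Quotient.eq_zero_iff_mem, map_mul, hw]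
      have : r • φ x = 0 := by rw [← map_smul, hann r hr, map_zero]
      rwa [Algebra.smul_def] at this
    obtain ⟨r, hr⟩ := h u v (soc f u hu) (soc g v hv) (by
      rw [← Ideal.Quotient.eq_zero_iff_mem, hu]; exact hx)
    refine ⟨r, LinearMap.ext fun y => ?_⟩
    obtain ⟨c, rfl⟩ : ∃ c : R, c • x = y := by
      have := IsSimpleModule.toSpanSingleton_surjective R hx0 y
      simpa using this
    have : r • f x = g x := by
      rw [← Ideal.Quotient.eq_zero_iff_mem, map_sub, map_mul, hu, hv, sub_eq_zero] at hr
      rw [hr, Algebra.smul_def]; rfl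
    rw [map_smul, map_smul, LinearMap.smul_apply, this]
  by_cases hsub : Subsingleton (M →ₗ[R] (R ⧸ K))
  · simp
  · rw [not_subsingleton_iff_nontrivial] at hsub
    have : IsSimpleModule R (M →ₗ[R] (R ⧸ K)) := by
      rw [isSimpleModule_iff_toSpanSingleton_surjective]
      refine ⟨hsub, fun f hf g => ?_⟩
      obtain ⟨r, hr⟩ := key f g hf
      exact ⟨r, by simpa using hr⟩
    rw [Module.length_eq_one]

lemma len_hom_le {K : Ideal R} (h : P1 K) {M : Type u} [AddCommGroup M] [Module R M]
    (hM : IsFiniteLength R M) :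
    Module.length R (M →ₗ[R] (R ⧸ K)) ≤ Module.length R M := by
  induction hM with
  | of_subsingleton => simp
  | @of_simple_quotient M _ _ N hs hN ih =>
    rw [len_ker_range (LinearMap.lcomp R (R ⧸ K) N.subtype),
      Module.length_eq_add_of_exact N.subtype N.mkQ (Submodule.subtype_injective _)
        (Submodule.mkQ_surjective _) (LinearMap.exact_subtype_mkQ N), Module.length_eq_one (R := R) (M := M ⧸ N),
      add_comm]
    refine add_le_add ?_ ?_
    · refine le_trans (Module.length_le_of_injective _ (Submodule.subtype_injective _)) ih
    · refine (len_ker_lcomp _).trans ?_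
      rw [Submodule.range_subtype]
      exact len_hom_simple h

lemma finlen_of_pow [IsNoetherianRing R] {K : Ideal R} {n : ℕ} (h : 𝔫 ^ n ≤ K) :
    IsFiniteLength R (R ⧸ K) := by
  have : IsArtinianRing (R ⧸ K) := by
    rw [isArtinianRing_iff_krullDimLE_zero,
      Ideal.krullDimLE_zero_quotient_iff_forall_minimalPrimes_isMaximal]
    intro P hP
    have hPp : P.IsPrime := hP.1.1
    have : 𝔫 ≤ P := hPp.le_of_pow_le (h.trans hP.1.2)
    have := (IsLocalRing.maximalIdeal.isMaximal R).eq_of_le hPp.ne_top this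
    rw [← this]; infer_instance
  rw [isFiniteLength_iff_isNoetherian_isArtinian]
  refine ⟨inferInstance, ?_⟩
  have := Module.length_ne_top (R := R ⧸ K) (M := R ⧸ K)
  rw [← Module.length_eq_of_surjective (S := R) Ideal.Quotient.mk_surjective,
    Module.length_ne_top_iff, isFiniteLength_iff_isNoetherian_isArtinian] at this
  exact this.2

def HP (K A : Ideal R) : Prop := ∀ f : A →ₗ[R] (R ⧸ K), (∀ a : A, (a : R) ∈ K → f a = 0) →
  ∃ s : R, ∀ a : A, f a = Ideal.Quotient.mk K (s * a)

lemma inj_base [IsNoetherianRing R] {K : Ideal R} {n : ℕ} (hn : 𝔫 ^ n ≤ K) (h : P1 K)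
    {M : Type u} [AddCommGroup M] [Module R M] (i : M →ₗ[R] (R ⧸ K)) (hi : Function.Injective i)
    (f : M →ₗ[R] (R ⧸ K)) : ∃ g : (R ⧸ K) →ₗ[R] (R ⧸ K), g ∘ₗ i = f := by
  have fl := finlen_of_pow hn
  have flM : IsFiniteLength R M := fl.of_injective hi
  let ρ := LinearMap.lcomp R (R ⧸ K) i
  have h1 := len_ker_range ρ
  have h2 : Module.length R (LinearMap.ker ρ) ≤ Module.length R ((R ⧸ K) ⧸ LinearMap.range i) :=
    (len_ker_lcomp i).trans (len_hom_le h (fl.of_surjective (Submodule.mkQ_surjective _)))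
  have h3 : Module.length R (R ⧸ K) ≤ Module.length R ((R ⧸ K) →ₗ[R] (R ⧸ K)) := by
    refine Module.length_le_of_injective (LinearMap.mul R (R ⧸ K)) ?_
    intro a b hab
    have := LinearMap.congr_fun hab 1
    simpa using this
  have h4 := Module.length_eq_add_of_exact i (LinearMap.range i).mkQ hi
    (Submodule.mkQ_surjective _) (LinearMap.exact_map_mkQ_range i)
  have h5 := len_hom_le h flM
  have hfin : Module.length R ((R ⧸ K) ⧸ LinearMap.range i) ≠ ⊤ :=
    Module.length_ne_top_iff.2 (fl.of_surjective (Submodule.mkQ_surjective _))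
  have flH : IsFiniteLength R (M →ₗ[R] (R ⧸ K)) :=
    Module.length_ne_top_iff.1 (ne_top_of_le_ne_top (Module.length_ne_top_iff.2 flM) h5)
  have hle : Module.length R (M →ₗ[R] (R ⧸ K)) ≤ Module.length R (LinearMap.range ρ) := by
    refine h5.trans ?_
    rw [← ENat.add_le_add_iff_right hfin, ← h4]
    refine h3.trans ?_
    rw [h1, add_comm]
    exact add_le_add le_rfl h2
  have htop : LinearMap.range ρ = ⊤ := by
    by_contra hne
    obtain ⟨_, _⟩ := isFiniteLength_iff_isNoetherian_isArtinian.1 flH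
    exact absurd (Submodule.length_lt hne) (not_lt.2 hle)
  obtain ⟨g, hg⟩ := LinearMap.range_eq_top.1 htop f
  exact ⟨g, hg⟩

lemma HP_base [IsNoetherianRing R] {K : Ideal R} {n : ℕ} (hn : 𝔫 ^ n ≤ K) (h : P1 K)
    (A : Ideal R) : HP K A := by
  intro f hf
  let N : Submodule R A := Submodule.comap A.subtype K
  let i : (A ⧸ N) →ₗ[R] (R ⧸ K) := N.mapQ K A.subtype le_rfl
  have hi : Function.Injective i := by
    rw [← LinearMap.ker_eq_bot, LinearMap.ker_eq_bot']
    intro x hx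
    obtain ⟨x, rfl⟩ := Submodule.Quotient.mk_surjective _ x
    have hx' : (Submodule.Quotient.mk (x : R) : R ⧸ K) = 0 := hx
    rw [Submodule.Quotient.mk_eq_zero] at hx' ⊢
    exact hx'
  obtain ⟨g, hg⟩ := inj_base hn h i hi (N.liftQ f fun a ha => hf a ha)
  obtain ⟨s, hs⟩ := Ideal.Quotient.mk_surjective (g 1)
  refine ⟨s, fun a => ?_⟩
  have h1 := LinearMap.congr_fun hg (Submodule.Quotient.mk a)
  have h2 : g (i (Submodule.Quotient.mk a)) = f a := h1
  rw [← h2, map_mul, hs]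
  have : i (Submodule.Quotient.mk a) = (a : R) • (1 : R ⧸ K) := by
    rw [Algebra.smul_def, mul_one]; rfl
  rw [this, map_smul, Algebra.smul_def, mul_comm]; rfl

/-- double annihilator -/
lemma dbl_ann [IsNoetherianRing R] {K : Ideal R} {n : ℕ} (hn : 𝔫 ^ n ≤ K) (h : P1 K)
    {A : Ideal R} (hKA : K ≤ A) (s : R) (hs : ∀ c, (∀ a ∈ A, c * a ∈ K) → c * s ∈ K) : s ∈ A := by
  by_contra hsA
  -- the cyclic module generated by s modulo A is nonzero
  -- choose c with c * s ∉ A and 𝔫 c s ⊆ A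
  obtain ⟨c, hc, hc'⟩ : ∃ c, c * s ∉ A ∧ ∀ r ∈ 𝔫, r * (c * s) ∈ A := by
    by_contra! hcon
    have : ∀ m : ℕ, ∃ c ∈ 𝔫 ^ m, c * s ∉ A := by
      intro m
      induction m with
      | zero => exact ⟨1, by simp, by simpa using hsA⟩
      | succ m ih =>
        obtain ⟨c, hc, hcs⟩ := ih
        obtain ⟨r, hr, hrs⟩ := hcon c hcs
        exact ⟨r * c, by rw [pow_succ']; exact Ideal.mul_mem_mul hr hc, by rwa [mul_assoc]⟩
    obtain ⟨c, hc, hcs⟩ := this n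
    exact hcs (A.mul_mem_right _ (hKA (hn hc)))
  obtain ⟨u, hu, huK⟩ : ∃ u, (∀ r ∈ 𝔫, r * u ∈ K) ∧ u ∉ K := by
    by_contra! hcon
    have : ∀ m : ℕ, ∃ c ∈ 𝔫 ^ m, c ∉ K := by
      intro m
      induction m with
      | zero => exact ⟨1, by simp, fun h1 => hsA (hKA (by simpa using K.mul_mem_right s h1))⟩
      | succ m ih =>
        obtain ⟨c, hc, hcs⟩ := ih
        by_contra! h2
        exact hcs (hcon c fun r hr => h2 _ (by rw [pow_succ']; exact Ideal.mul_mem_mul hr hc))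
    obtain ⟨c, hc, hcs⟩ := this n
    exact hcs (hn hc)
  set w := c * s with hw
  have hunit : ∀ r, r * w ∈ A → r ∈ 𝔫 := by
    intro r hr
    by_contra hrn
    rw [IsLocalRing.mem_maximalIdeal, mem_nonunits_iff, not_not] at hrn
    exact hc ((Ideal.unit_mul_mem_iff_mem A hrn).1 hr)
  obtain ⟨g, g1, g2⟩ := ext_single A (0 : A →ₗ[R] (R ⧸ K)) w (Ideal.Quotient.mk K u) (by
    intro r hr
    have := hu r (hunit r hr)
    rw [LinearMap.zero_apply, Algebra.smul_def, Ideal.Quotient.algebraMap_eq, ← map_mul,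
      Ideal.Quotient.eq_zero_iff_mem.2 this])
  obtain ⟨t, ht⟩ := HP_base hn h _ g (fun a ha => by
    have := g1 a (hKA ha); simpa using this)
  have hts : t * s ∈ K := hs t fun a ha => by
    rw [← Ideal.Quotient.eq_zero_iff_mem, ← ht ⟨a, le_sup_left (a := A) ha⟩, g1 a ha]; rfl
  have := ht ⟨w, le_sup_right (a := A) (Ideal.mem_span_singleton_self w)⟩
  rw [g2] at this
  apply huK
  rw [← Ideal.Quotient.eq_zero_iff_mem, this, Ideal.Quotient.eq_zero_iff_mem]
  have := K.mul_mem_left c hts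
  convert this using 1
  simp [hw]; ring
end Base
end S9

namespace S9
section Lift
universe u
variable {R : Type u} [CommRing R]

lemma mk_smul_eq {K : Ideal R} (r c : R) :
    r • (Ideal.Quotient.mk K c) = Ideal.Quotient.mk K (r * c) := by
  rw [Algebra.smul_def, map_mul]; rfl

lemma div_map {K A : Ideal R} {l : R} (hl : ∀ c, l * c ∈ K → c ∈ K) (g : A →ₗ[R] (R ⧸ K))
    (hg : ∀ a, ∃ t : R ⧸ K, g a = l • t) : ∃ f : A →ₗ[R] (R ⧸ K), l • f = g := by
  let m : (R ⧸ K) →ₗ[R] (R ⧸ K) := LinearMap.lsmul R (R ⧸ K) l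
  have hm : Function.Injective m := by
    rw [← LinearMap.ker_eq_bot, LinearMap.ker_eq_bot']
    intro x hx
    obtain ⟨x, rfl⟩ := Ideal.Quotient.mk_surjective x
    have hx' : l • (Ideal.Quotient.mk K x) = 0 := hx
    rw [mk_smul_eq, Ideal.Quotient.eq_zero_iff_mem] at hx'
    rw [Ideal.Quotient.eq_zero_iff_mem]
    exact hl x hx'
  have hr : ∀ a, g a ∈ LinearMap.range m := fun a => by
    obtain ⟨t, ht⟩ := hg a
    exact ⟨t, ht.symm⟩
  let f := (LinearEquiv.ofInjective m hm).symm.toLinearMap ∘ₗ g.codRestrict _ hr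
  refine ⟨f, LinearMap.ext fun a => ?_⟩
  have := LinearEquiv.apply_symm_apply (LinearEquiv.ofInjective m hm) (g.codRestrict _ hr a)
  have := congrArg Subtype.val this
  exact this

lemma mul_map {K A : Ideal R} (s : R) : ∃ f : A →ₗ[R] (R ⧸ K), ∀ a : A,
    f a = Ideal.Quotient.mk K (s * a) :=
  ⟨(Submodule.mkQ K) ∘ₗ (s • A.subtype), fun a => rfl⟩

variable [IsLocalRing R] [IsNoetherianRing R]
local notation "𝔫" => IsLocalRing.maximalIdeal R

lemma HP_step {K A : Ideal R} (hKA : K ≤ A) {l : R} (hl : l ∈ 𝔫) (rK : ∀ c, l * c ∈ K → c ∈ K)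
    (rA : ∀ c, l * c ∈ A → c ∈ A) (h : HP (K ⊔ Ideal.span {l}) (A ⊔ Ideal.span {l})) : HP K A := by
  let N : Submodule R (A →ₗ[R] (R ⧸ K)) :=
    { carrier := {f | ∀ a : A, (a : R) ∈ K → f a = 0}
      add_mem' := fun {f g} hf hg a ha => by simp [hf a ha, hg a ha]
      zero_mem' := fun a _ => rfl
      smul_mem' := fun c f hf a ha => by simp [hf a ha] }
  let m1 : A →ₗ[R] (R ⧸ K) := (Submodule.mkQ K) ∘ₗ A.subtype
  have hN : N ≤ Submodule.span R {m1} := by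
    apply Submodule.le_of_le_smul_of_le_jacobson_bot (I := Ideal.span {l})
      (IsNoetherian.noetherian N)
    · rw [IsLocalRing.jacobson_eq_maximalIdeal ⊥ bot_ne_top]
      rwa [Ideal.span_singleton_le_iff_mem]
    · intro f hf
      let π : (R ⧸ K) →ₗ[R] (R ⧸ (K ⊔ Ideal.span {l})) := Submodule.factor le_sup_left
      have hπ : ∀ c, π (Ideal.Quotient.mk K c) = Ideal.Quotient.mk _ c := fun c => rfl
      obtain ⟨g, g1, g2⟩ := ext_single A (π ∘ₗ f) l 0 (by
        intro r hr
        rw [mul_comm] at hr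
        have hrA := rA r hr
        have e : (⟨r * l, by rwa [mul_comm]⟩ : A) = l • ⟨r, hrA⟩ := Subtype.ext (mul_comm _ _)
        rw [e, map_smul, smul_zero]
        obtain ⟨t, ht⟩ := Ideal.Quotient.mk_surjective ((π ∘ₗ f) ⟨r, hrA⟩)
        rw [← ht, mk_smul_eq, Ideal.Quotient.eq_zero_iff_mem]
        exact le_sup_right (a := K) (Ideal.mul_mem_right _ _ (Ideal.mem_span_singleton_self l)))
      obtain ⟨s, hs⟩ := h g (by
        rintro ⟨a, ha⟩ haK
        obtain ⟨w, hw⟩ := mem_sup_span.1 (show a ∈ K ⊔ Ideal.span {l} from haK)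
        have e : (⟨a, ha⟩ : (A ⊔ Ideal.span {l} : Ideal R)) =
          ⟨a - l * w, le_sup_left (a := A) (hKA hw)⟩ +
            w • ⟨l, le_sup_right (a := A) (Ideal.mem_span_singleton_self l)⟩ :=
          Subtype.ext (by simp [mul_comm])
        rw [e, map_add, map_smul, g2, smul_zero, add_zero, g1 _ (hKA hw), LinearMap.comp_apply,
          hf _ hw, map_zero])
      obtain ⟨f1, hf1⟩ := div_map rK (f - s • m1) (by
        intro a
        obtain ⟨t, ht⟩ := Ideal.Quotient.mk_surjective (f a)
        have h1 := hs ⟨a, le_sup_left (a := A) a.2⟩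
        rw [g1 _ a.2, LinearMap.comp_apply] at h1
        change π (f a) = _ at h1
        rw [← ht, hπ, Ideal.Quotient.mk_eq_mk_iff_sub_mem] at h1
        obtain ⟨w, hw⟩ := mem_sup_span.1 h1
        refine ⟨Ideal.Quotient.mk K w, ?_⟩
        rw [mk_smul_eq, LinearMap.sub_apply, ← ht]
        have : (s • m1) a = Ideal.Quotient.mk K (s * a) := rfl
        rw [this, ← map_sub, Ideal.Quotient.mk_eq_mk_iff_sub_mem]
        exact hw)
      have e : f = s • m1 + l • f1 := by rw [hf1]; abel
      rw [e]
      refine Submodule.add_mem_sup (Submodule.smul_mem _ _ (Submodule.mem_span_singleton_self _))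
        (Submodule.smul_mem_smul (Ideal.mem_span_singleton_self l) ?_)
      intro a ha
      have h1 : l • f1 a = 0 := by
        have := LinearMap.congr_fun hf1 a
        rw [LinearMap.smul_apply] at this
        rw [this, LinearMap.sub_apply, hf a ha, zero_sub, neg_eq_zero]
        change Ideal.Quotient.mk K (s * a) = 0
        rw [Ideal.Quotient.eq_zero_iff_mem]
        exact K.mul_mem_left _ ha
      obtain ⟨t, ht⟩ := Ideal.Quotient.mk_surjective (f1 a)
      rw [← ht, mk_smul_eq, Ideal.Quotient.eq_zero_iff_mem] at h1
      rw [← ht, Ideal.Quotient.eq_zero_iff_mem]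
      exact rK t h1
  intro f hf
  obtain ⟨s, hs⟩ := Submodule.mem_span_singleton.1 (hN (show f ∈ N from hf))
  refine ⟨s, fun a => ?_⟩
  rw [← hs]; rfl

lemma HP_of_list {L : List R} : ∀ {K A : Ideal R}, K ≤ A → (∀ y ∈ L, y ∈ 𝔫) → Reg L K → Reg L A →
    (∀ B, HP (K ⊔ Ideal.ofList L) B) → HP K A := by
  induction L with
  | nil => 
    intro K A _ _ _ _ h
    simpa using h A
  | cons l L ih =>
    intro K A hKA hL rK rA h
    refine HP_step hKA (hL l (by simp)) rK.1 rA.1 (ih (sup_le_sup_right hKA _)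
      (fun y hy => hL y (by simp [hy])) rK.2 rA.2 ?_)
    intro B
    have := h B
    rwa [Ideal.ofList_cons, ← sup_assoc] at this

lemma mem_col {K A : Ideal R} {c : R} : c ∈ Submodule.colon K (A : Set R) ↔ ∀ a ∈ A, c * a ∈ K := by
  simp [Submodule.mem_colon]

lemma spec_step {K A : Ideal R} {l : R} (rK : ∀ c, l * c ∈ K → c ∈ K)
    (h : HP K A) :
    (∀ c, l * c ∈ Submodule.colon K (A : Set R) → c ∈ Submodule.colon K (A : Set R)) ∧
    Submodule.colon (K ⊔ Ideal.span {l}) ((A ⊔ Ideal.span {l} : Ideal R) : Set R) =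
      Submodule.colon K (A : Set R) ⊔ Ideal.span {l} := by
  constructor
  · intro c hc
    rw [mem_col] at hc ⊢
    intro a ha
    apply rK
    rw [← mul_assoc]; exact hc a ha
  · ext c
    rw [mem_col, mem_sup_span]
    constructor
    · intro hc
      obtain ⟨g, hg⟩ := mul_map (K := K) (A := A) c
      obtain ⟨f, hf⟩ := div_map rK g (by
        intro a
        obtain ⟨w, hw⟩ := mem_sup_span.1 (hc a (le_sup_left (a := A) a.2))
        exact ⟨Ideal.Quotient.mk K w, by
          rw [mk_smul_eq, hg, Ideal.Quotient.mk_eq_mk_iff_sub_mem]; exact hw⟩)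
      obtain ⟨s, hs⟩ := h f (by
        intro a ha
        have h1 : l • f a = 0 := by
          have := LinearMap.congr_fun hf a
          rw [LinearMap.smul_apply] at this
          rw [this, hg, Ideal.Quotient.eq_zero_iff_mem]
          exact K.mul_mem_left _ ha
        obtain ⟨t, ht⟩ := Ideal.Quotient.mk_surjective (f a)
        rw [← ht, mk_smul_eq, Ideal.Quotient.eq_zero_iff_mem] at h1
        rw [← ht, Ideal.Quotient.eq_zero_iff_mem]
        exact rK t h1)
      refine ⟨s, mem_col.2 fun a ha => ?_⟩
      have := LinearMap.congr_fun hf ⟨a, ha⟩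
      rw [LinearMap.smul_apply, hs, mk_smul_eq, hg, Ideal.Quotient.mk_eq_mk_iff_sub_mem] at this
      convert K.neg_mem this using 1
      simp; ring
    · rintro ⟨w, hw⟩ a ha
      rw [mem_col] at hw
      obtain ⟨v, hv⟩ := mem_sup_span.1 ha
      refine mem_sup_span.2 ⟨c * v + w * (a - l * v), ?_⟩
      convert hw _ hv using 1
      ring

lemma spec_of_list {L : List R} : ∀ {K A : Ideal R}, K ≤ A → (∀ y ∈ L, y ∈ 𝔫) → Reg L K → Reg L A →
    (∀ B, HP (K ⊔ Ideal.ofList L) B) → Reg L (Submodule.colon K (A : Set R)) ∧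
      Submodule.colon (K ⊔ Ideal.ofList L) ((A ⊔ Ideal.ofList L : Ideal R) : Set R) =
      Submodule.colon K (A : Set R) ⊔ Ideal.ofList L := by
  induction L with
  | nil =>
    intro K A _ _ _ _ h
    simp [Reg]
  | cons l L ih =>
    intro K A hKA hL rK rA h
    obtain ⟨h1, h2⟩ := spec_step rK.1 (HP_of_list hKA hL rK rA h)
    obtain ⟨h3, h4⟩ := ih (sup_le_sup_right hKA (Ideal.span {l}))
      (fun y hy => hL y (by simp [hy])) rK.2 rA.2 (fun B => by
        have := h B
        rwa [Ideal.ofList_cons, ← sup_assoc] at this)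
    rw [h2] at h3 h4
    refine ⟨⟨h1, h3⟩, ?_⟩
    rw [Ideal.ofList_cons, ← sup_assoc, ← sup_assoc, ← sup_assoc]
    exact h4
end Lift
end S9

set_option linter.unusedSectionVars false
namespace S9
section ThmA
universe u
variable {R : Type u} [CommRing R]

/-- the excess condition -/
def Exc (I : Ideal R) : Prop :=
  3 * Module.length R (R ⧸ I) < Module.length R (I →ₗ[R] (R ⧸ I))

/-- ideals with three generators have no excess -/
lemma not_exc_span (x y z : R) : ¬ Exc (Ideal.span {x, y, z}) := by
  unfold Exc
  set C := Ideal.span {x, y, z} with hC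
  have hx : x ∈ C := Ideal.subset_span (by simp)
  have hy : y ∈ C := Ideal.subset_span (by simp)
  have hz : z ∈ C := Ideal.subset_span (by simp)
  rw [not_lt]
  let F : (C →ₗ[R] (R ⧸ C)) →ₗ[R] (Fin 3 → (R ⧸ C)) :=
    LinearMap.pi ![LinearMap.applyₗ ⟨x, hx⟩, LinearMap.applyₗ ⟨y, hy⟩, LinearMap.applyₗ ⟨z, hz⟩]
  have hF : Function.Injective F := by
    rw [← LinearMap.ker_eq_bot, LinearMap.ker_eq_bot']
    intro f hf
    have h0 : f ⟨x, hx⟩ = 0 := congrFun hf 0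
    have h1 : f ⟨y, hy⟩ = 0 := congrFun hf 1
    have h2 : f ⟨z, hz⟩ = 0 := congrFun hf 2
    ext ⟨c, hc⟩
    obtain ⟨p, q, r, rfl⟩ : ∃ p q r, c = p * x + q * y + r * z := by
      rw [hC, Ideal.mem_span_insert] at hc
      obtain ⟨p, w, hw, rfl⟩ := hc
      rw [Ideal.mem_span_pair] at hw
      obtain ⟨q, r, rfl⟩ := hw
      exact ⟨p, q, r, by ring⟩
    have : (⟨p * x + q * y + r * z, hc⟩ : C) = p • ⟨x, hx⟩ + q • ⟨y, hy⟩ + r • ⟨z, hz⟩ :=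
      Subtype.ext (by simp)
    rw [this, map_add, map_add, map_smul, map_smul, map_smul, h0, h1, h2]; simp
  have := Module.length_le_of_injective F hF
  simpa [Module.length_pi_of_fintype] using this

def Bm {A C X : Ideal R} (h : ∀ a ∈ A, ∀ c ∈ C, a * c ∈ X) :
    A →ₗ[R] (R ⧸ C) →ₗ[R] (R ⧸ X) where
  toFun a := Submodule.mapQ C X (LinearMap.mulLeft R (a : R)) (fun c hc => by
    rw [Submodule.mem_comap, LinearMap.mulLeft_apply]; exact h a a.2 c hc)
  map_add' a b := by
    refine LinearMap.ext fun s => ?_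
    obtain ⟨s, rfl⟩ := Ideal.Quotient.mk_surjective s
    change Ideal.Quotient.mk X (((a + b : A) : R) * s) =
      Ideal.Quotient.mk X (a * s) + Ideal.Quotient.mk X (b * s)
    rw [← map_add, ← add_mul]; rfl
  map_smul' r a := by
    refine LinearMap.ext fun s => ?_
    obtain ⟨s, rfl⟩ := Ideal.Quotient.mk_surjective s
    change Ideal.Quotient.mk X (((r • a : A) : R) * s) =
      r • Ideal.Quotient.mk X (a * s)
    rw [Algebra.smul_def, Ideal.Quotient.algebraMap_eq, ← map_mul, ← mul_assoc]; rfl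

lemma Bm_mk {A C X : Ideal R} (h : ∀ a ∈ A, ∀ c ∈ C, a * c ∈ X) (a : A) (s : R) :
    Bm h a (Ideal.Quotient.mk C s) = Ideal.Quotient.mk X (a * s) := rfl

/-- The pullback -/
def pbMap (X I : Ideal R) (hXI : X ≤ I) (x : Fin 3 → I) :
    ((I →ₗ[R] (R ⧸ I)) × (Fin 3 → R ⧸ X)) →ₗ[R] (Fin 3 → R ⧸ I) where
  toFun p := fun k => p.1 (x k) - Submodule.factor hXI (p.2 k)
  map_add' p q := by ext k; simp; abel
  map_smul' r p := by ext k; simp [smul_sub]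

lemma exc_iff {X I : Ideal R} (hXI : X ≤ I) (x : Fin 3 → I)
    (hfin : IsFiniteLength R (R ⧸ X)) : Exc I ↔
      3 * Module.length R (R ⧸ X) < Module.length R (LinearMap.ker (pbMap X I hXI x)) := by
  have hsurj : Function.Surjective (pbMap X I hXI x) := by
    intro v
    choose w hw using fun k => Submodule.factor_surjective hXI (v k)
    refine ⟨(0, fun k => - w k), ?_⟩
    ext k
    rw [← hw k]
    change (0 : R ⧸ I) - Submodule.factor hXI (- w k) = _
    rw [map_neg, zero_sub, neg_neg]
  have h1 := len_ker_range (pbMap X I hXI x)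
  rw [LinearMap.range_eq_top.2 hsurj, Module.length_top, Module.length_prod] at h1
  have e : ∀ K : Ideal R, Module.length R (Fin 3 → R ⧸ K) = 3 * Module.length R (R ⧸ K) :=
    fun K => by simp [Module.length_pi_of_fintype]
  rw [e, e] at h1
  have f1 : 3 * Module.length R (R ⧸ X) ≠ ⊤ := WithTop.mul_ne_top (by decide) (Module.length_ne_top_iff.2 hfin)
  have f2 : 3 * Module.length R (R ⧸ I) ≠ ⊤ := WithTop.mul_ne_top (by decide)
    (Module.length_ne_top_iff.2 (hfin.of_surjective (Submodule.factor_surjective hXI)))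
  unfold Exc
  rw [← ENat.add_lt_add_iff_right f1, h1, add_comm, ENat.add_lt_add_iff_right f2]

lemma lift_inj {M N P : Type*} [AddCommGroup M] [AddCommGroup N] [AddCommGroup P] [Module R M]
    [Module R N] [Module R P] (G : M →ₗ[R] P) (hG : Function.Injective G) (F : N →ₗ[R] P)
    (h : ∀ n, ∃ m, G m = F n) : ∃ φ : N →ₗ[R] M, ∀ n, G (φ n) = F n := by
  refine ⟨(LinearEquiv.ofInjective G hG).symm.toLinearMap ∘ₗ F.codRestrict _ h, fun n => ?_⟩
  have := LinearEquiv.apply_symm_apply (LinearEquiv.ofInjective G hG) (F.codRestrict _ h n)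
  exact congrArg Subtype.val this

def EE {X I J : Ideal R} (hXI : X ≤ I) (hXJ : X ≤ J) (h1 : ∀ a ∈ I, ∀ c ∈ J, a * c ∈ X)
    (h2 : ∀ a ∈ J, ∀ c ∈ I, a * c ∈ X) (x : Fin 3 → X) :
    Submodule R ((I →ₗ[R] (R ⧸ I)) × (Fin 3 → R ⧸ X) × (J →ₗ[R] (R ⧸ J))) where
  carrier := {p | (∀ k, p.1 ⟨x k, hXI (x k).2⟩ = Submodule.factor hXI (p.2.1 k)) ∧
    (∀ k, p.2.2 ⟨x k, hXJ (x k).2⟩ = Submodule.factor hXJ (p.2.1 k)) ∧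
    ∀ (i : I) (j : J) (c : Fin 3 → R), (i : R) * j = ∑ k, c k * x k →
      Bm h1 i (p.2.2 j) + Bm h2 j (p.1 i) = ∑ k, c k • p.2.1 k}
  zero_mem' := by simp
  add_mem' := by
    rintro p q ⟨a1, a2, a3⟩ ⟨b1, b2, b3⟩
    refine ⟨fun k => by simp [a1, b1], fun k => by simp [a2, b2], fun i j c h => ?_⟩
    have := congrArg₂ (· + ·) (a3 i j c h) (b3 i j c h)
    simp only [Prod.fst_add, Prod.snd_add, LinearMap.add_apply, map_add, Pi.add_apply, smul_add,
      Finset.sum_add_distrib]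
    rw [← this]; abel
  smul_mem' := by
    rintro r p ⟨a1, a2, a3⟩
    refine ⟨fun k => by simp [a1], fun k => by simp [a2], fun i j c h => ?_⟩
    have := congrArg (r • ·) (a3 i j c h)
    simp only [Prod.smul_fst, Prod.smul_snd, LinearMap.smul_apply, map_smul, Pi.smul_apply]
    simp only [smul_add, Finset.smul_sum] at this
    rw [this]
    exact Finset.sum_congr rfl fun k _ => smul_comm _ _ _

/-- A map on `X` from values on generators -/
lemma exists_Psi {X : Ideal R} (x : Fin 3 → X) (hx : ∀ a ∈ X, ∃ c : Fin 3 → R, a = ∑ k, c k * x k)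
    (hsyz : ∀ c : Fin 3 → R, ∑ k, c k * (x k : R) = 0 → ∀ k, c k ∈ X) (ψ : Fin 3 → R ⧸ X) :
    ∃ Ψ : X →ₗ[R] (R ⧸ X), ∀ (a : X) (c : Fin 3 → R), (a : R) = ∑ k, c k * x k →
      Ψ a = ∑ k, c k • ψ k := by
  let T : (Fin 3 → R) →ₗ[R] X := Fintype.linearCombination R x
  have hT : ∀ c, ((T c : X) : R) = ∑ k, c k * x k := fun c => by
    simp [T, Fintype.linearCombination_apply]
  have hTs : Function.Surjective T := by
    intro a
    obtain ⟨c, hc⟩ := hx a a.2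
    exact ⟨c, Subtype.ext (by rw [hT, hc])⟩
  let U : (Fin 3 → R) →ₗ[R] (R ⧸ X) := Fintype.linearCombination R ψ
  have hU : LinearMap.ker T ≤ LinearMap.ker U := by
    intro c hc
    rw [LinearMap.mem_ker] at hc ⊢
    have h0 := hsyz c (by rw [← hT, hc]; rfl)
    simp only [U, Fintype.linearCombination_apply]
    refine Finset.sum_eq_zero fun k _ => ?_
    obtain ⟨s, hs⟩ := Ideal.Quotient.mk_surjective (ψ k)
    rw [← hs, mk_smul_eq, Ideal.Quotient.eq_zero_iff_mem]
    exact X.mul_mem_right _ (h0 k)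
  refine ⟨(LinearMap.ker T).liftQ U hU ∘ₗ (T.quotKerEquivOfSurjective hTs).symm.toLinearMap, ?_⟩
  intro a c hc
  have : a = T.quotKerEquivOfSurjective hTs (Submodule.Quotient.mk c) :=
    Subtype.ext (by rw [hc, ← hT]; rfl)
  rw [LinearMap.comp_apply, this]
  simp only [LinearEquiv.coe_coe, LinearEquiv.symm_apply_apply]
  rfl

variable [IsLocalRing R] [IsNoetherianRing R]
local notation "𝔫" => IsLocalRing.maximalIdeal R

lemma EE_surj {X I J : Ideal R} (hXI : X ≤ I) (hXJ : X ≤ J) (h1 : ∀ a ∈ I, ∀ c ∈ J, a * c ∈ X)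
    (h2 : ∀ a ∈ J, ∀ c ∈ I, a * c ∈ X) (x : Fin 3 → X)
    (hx : ∀ a ∈ X, ∃ c : Fin 3 → R, a = ∑ k, c k * x k)
    (hsyz : ∀ c : Fin 3 → R, ∑ k, c k * (x k : R) = 0 → ∀ k, c k ∈ X)
    (hJ : ∀ c, (∀ a ∈ I, a * c ∈ X) → c ∈ J) (hHP : HP X I)
    (φ : I →ₗ[R] (R ⧸ I)) (ψ : Fin 3 → R ⧸ X)
    (hφ : ∀ k, φ ⟨x k, hXI (x k).2⟩ = Submodule.factor hXI (ψ k)) :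
    ∃ φ' : J →ₗ[R] (R ⧸ J), (φ, ψ, φ') ∈ EE hXI hXJ h1 h2 x := by
  obtain ⟨Ψ, hΨ⟩ := exists_Psi x hx hsyz ψ
  have hG : Function.Injective (Bm h1).flip := by
    rw [← LinearMap.ker_eq_bot, LinearMap.ker_eq_bot']
    intro s hs
    obtain ⟨s, rfl⟩ := Ideal.Quotient.mk_surjective s
    rw [Ideal.Quotient.eq_zero_iff_mem]
    refine hJ s fun a ha => ?_
    have := LinearMap.congr_fun hs ⟨a, ha⟩
    rw [LinearMap.flip_apply, Bm_mk, LinearMap.zero_apply, Ideal.Quotient.eq_zero_iff_mem] at this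
    exact this
  let F : J →ₗ[R] I →ₗ[R] (R ⧸ X) := LinearMap.mk₂ R
    (fun j i => Ψ ⟨i * j, h1 i i.2 j j.2⟩ - Bm h2 j (φ i))
    (fun j j' i => by
      have : (⟨i * (j + j' : J), h1 i i.2 _ (j + j').2⟩ : X) =
        ⟨i * j, h1 i i.2 j j.2⟩ + ⟨i * j', h1 i i.2 j' j'.2⟩ := Subtype.ext (by simp; ring)
      rw [this, map_add, map_add, LinearMap.add_apply]; abel)
    (fun r j i => by
      have : (⟨i * (r • j : J), h1 i i.2 _ (r • j).2⟩ : X) =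
        r • ⟨i * j, h1 i i.2 j j.2⟩ := Subtype.ext (by simp; ring)
      rw [this, map_smul, map_smul, LinearMap.smul_apply, smul_sub])
    (fun j i i' => by
      have : (⟨(i + i' : I) * j, h1 _ (i + i').2 j j.2⟩ : X) =
        ⟨i * j, h1 i i.2 j j.2⟩ + ⟨i' * j, h1 i' i'.2 j j.2⟩ := Subtype.ext (by simp; ring)
      rw [this, map_add, map_add, map_add]; abel)
    (fun r j i => by
      have : (⟨(r • i : I) * j, h1 _ (r • i).2 j j.2⟩ : X) =
        r • ⟨i * j, h1 i i.2 j j.2⟩ := Subtype.ext (by simp; ring)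
      rw [this, map_smul, map_smul, map_smul, smul_sub])
  have hF : ∀ j i, F j i = Ψ ⟨i * j, h1 i i.2 j j.2⟩ - Bm h2 j (φ i) := fun j i => rfl
  have hBf : ∀ (j : J) (t : R ⧸ X), Bm h2 j (Submodule.factor hXI t) = (j : R) • t := by
    intro j t
    obtain ⟨t, rfl⟩ := Ideal.Quotient.mk_surjective t
    rw [mk_smul_eq]; rfl
  have hBf' : ∀ (i : I) (t : R ⧸ X), Bm h1 i (Submodule.factor hXJ t) = (i : R) • t := by
    intro j t
    obtain ⟨t, rfl⟩ := Ideal.Quotient.mk_surjective t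
    rw [mk_smul_eq]; rfl
  obtain ⟨φ', hφ'⟩ := lift_inj (Bm h1).flip hG F (by
    intro j
    obtain ⟨s, hs⟩ := hHP (F j) (by
      rintro ⟨a, haI⟩ ha
      obtain ⟨c, hc⟩ := hx a ha
      rw [hF, hΨ _ (fun k => (j : R) * c k) (by
        simp only [hc, Finset.sum_mul]
        exact Finset.sum_congr rfl fun k _ => by ring)]
      have e : (⟨a, haI⟩ : I) = ∑ k, c k • ⟨x k, hXI (x k).2⟩ := by
        apply Subtype.ext
        simp [hc]
      rw [e, map_sum, map_sum, sub_eq_zero]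
      refine Finset.sum_congr rfl fun k _ => ?_
      rw [map_smul, map_smul, hφ, hBf, mul_comm, mul_smul])
    refine ⟨Ideal.Quotient.mk J s, LinearMap.ext fun i => ?_⟩
    rw [hs, LinearMap.flip_apply, Bm_mk, mul_comm])
  refine ⟨φ', hφ, fun k => ?_, ?_⟩
  · apply hG
    ext i
    rw [hφ', hF, LinearMap.flip_apply, hBf', hΨ _ (fun k' => if k' = k then (i : R) else 0) (by simp)]
    have : Bm h2 ⟨x k, hXJ (x k).2⟩ (φ i) = 0 := by
      obtain ⟨t, ht⟩ := Ideal.Quotient.mk_surjective (φ i)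
      rw [← ht, Bm_mk, Ideal.Quotient.eq_zero_iff_mem]
      exact X.mul_mem_right _ (x k).2
    rw [this]
    simp
  · intro i j c hc
    have := LinearMap.congr_fun (hφ' j) i
    rw [LinearMap.flip_apply, hF] at this
    change Bm h1 i (φ' j) + Bm h2 j (φ i) = ∑ k, c k • ψ k
    rw [this, sub_add_cancel]
    exact hΨ _ c hc

lemma len_le_inj {M N : Type*} [AddCommGroup M] [AddCommGroup N] [Module R M] [Module R N]
    (S : Submodule R M) (T : Submodule R N) (f : M →ₗ[R] N) (hf : ∀ p ∈ S, f p ∈ T)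
    (hi : ∀ p ∈ S, f p = 0 → p = 0) : Module.length R S ≤ Module.length R T := by
  refine Module.length_le_of_injective (f.restrict hf) ?_
  rw [← LinearMap.ker_eq_bot, LinearMap.ker_eq_bot']
  rintro ⟨p, hp⟩ h
  exact Subtype.ext (hi p hp (congrArg Subtype.val h))

lemma exc_link_aux {X I J : Ideal R} (memJ : ∀ c, c ∈ J ↔ ∀ a ∈ I, c * a ∈ X) (hXI : X ≤ I) (x : Fin 3 → X)
    (hx : ∀ a ∈ X, ∃ c : Fin 3 → R, a = ∑ k, c k * x k)
    (hsyz : ∀ c : Fin 3 → R, ∑ k, c k * (x k : R) = 0 → ∀ k, c k ∈ X)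
    {n : ℕ} (hn : 𝔫 ^ n ≤ X) (hP : P1 X) (hE : Exc I) :
    Exc J := by
  have hXJ : X ≤ J := fun c hc => (memJ c).2 fun a _ => X.mul_mem_right _ hc
  have h2 : ∀ a ∈ J, ∀ c ∈ I, a * c ∈ X := fun a ha c hc => (memJ a).1 ha c hc
  have h1 : ∀ a ∈ I, ∀ c ∈ J, a * c ∈ X := fun a ha c hc => by rw [mul_comm]; exact h2 c hc a ha
  have hfin := finlen_of_pow hn
  rw [exc_iff hXI (fun k => ⟨x k, hXI (x k).2⟩) hfin] at hE
  rw [exc_iff hXJ (fun k => ⟨x k, hXJ (x k).2⟩) hfin]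
  refine hE.trans_le ?_
  have keyI : ∀ p, p ∈ LinearMap.ker (pbMap X I hXI (fun k => ⟨x k, hXI (x k).2⟩)) ↔
      ∀ k, p.1 ⟨x k, hXI (x k).2⟩ = Submodule.factor hXI (p.2 k) := fun p => by
    rw [LinearMap.mem_ker, funext_iff]
    exact forall_congr' fun k => sub_eq_zero
  have keyJ : ∀ p, p ∈ LinearMap.ker (pbMap X J hXJ (fun k => ⟨x k, hXJ (x k).2⟩)) ↔
      ∀ k, p.1 ⟨x k, hXJ (x k).2⟩ = Submodule.factor hXJ (p.2 k) := fun p => by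
    rw [LinearMap.mem_ker, funext_iff]
    exact forall_congr' fun k => sub_eq_zero
  let q1 : EE hXI hXJ h1 h2 x →ₗ[R]
      LinearMap.ker (pbMap X I hXI (fun k => ⟨x k, hXI (x k).2⟩)) :=
    { toFun := fun p => ⟨(p.1.1, p.1.2.1), (keyI _).2 p.2.1⟩
      map_add' := fun p q => rfl
      map_smul' := fun r p => rfl }
  have s1 : Function.Surjective q1 := by
    rintro ⟨⟨φ, ψ⟩, hp⟩
    obtain ⟨φ', h'⟩ := EE_surj hXI hXJ h1 h2 x hx hsyz
      (fun c hc => (memJ c).2 fun a ha => by rw [mul_comm]; exact hc a ha)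
      (HP_base hn hP I) φ ψ ((keyI _).1 hp)
    exact ⟨⟨(φ, ψ, φ'), h'⟩, rfl⟩
  refine (Module.length_le_of_surjective q1 s1).trans (len_le_inj (EE hXI hXJ h1 h2 x) _
    ((LinearMap.snd R _ _ ∘ₗ LinearMap.snd R _ _).prod (LinearMap.fst R _ _ ∘ₗ LinearMap.snd R _ _))
    (fun p hp => (keyJ _).2 hp.2.1) ?_)
  · rintro ⟨φ, ψ, φ'⟩ hp h0
    have e1 : φ' = 0 := congrArg (fun t => t.1) h0
    have e2 : ψ = 0 := congrArg (fun t => t.2) h0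
    subst e1; subst e2
    have : φ = 0 := by
      ext i
      obtain ⟨t, ht⟩ := Ideal.Quotient.mk_surjective (φ i)
      rw [← ht, LinearMap.zero_apply, Ideal.Quotient.eq_zero_iff_mem]
      refine dbl_ann hn hP hXI t fun j hj => ?_
      have hjJ := (memJ j).2 hj
      obtain ⟨c, hc⟩ := hx _ (h1 i i.2 j hjJ)
      have := hp.2.2 i ⟨j, hjJ⟩ c hc
      simp only [LinearMap.zero_apply, map_zero, zero_add, Pi.zero_apply, smul_zero,
        Finset.sum_const_zero] at this
      rw [← ht, Bm_mk, Ideal.Quotient.eq_zero_iff_mem] at this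
      exact this
    subst this
    rfl

theorem exc_link {X I : Ideal R} (hXI : X ≤ I) (x : Fin 3 → X)
    (hx : ∀ a ∈ X, ∃ c : Fin 3 → R, a = ∑ k, c k * x k)
    (hsyz : ∀ c : Fin 3 → R, ∑ k, c k * (x k : R) = 0 → ∀ k, c k ∈ X)
    {n : ℕ} (hn : 𝔫 ^ n ≤ X) (hP : P1 X) (hE : Exc I) :
    Exc (Submodule.colon X (I : Set R)) :=
  exc_link_aux (fun c => mem_col) hXI x hx hsyz hn hP hE
end ThmA
end S9

set_option linter.unusedSectionVars false
namespace S9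
section Chain
universe u
variable {R : Type u} [CommRing R]

lemma koszul {x y z : R} {D : Ideal R} (h : Reg [x, y, z] D) {p q r : R}
    (e : p * x + q * y + r * z ∈ D) :
    p ∈ Ideal.span {x, y, z} ⊔ D ∧ q ∈ Ideal.span {x, y, z} ⊔ D ∧
      r ∈ Ideal.span {x, y, z} ⊔ D := by
  obtain ⟨h1, h2, h3, -⟩ := h
  have mx : x ∈ Ideal.span {x, y, z} ⊔ D := Ideal.mem_sup_left (Ideal.subset_span (by simp))
  have my : y ∈ Ideal.span {x, y, z} ⊔ D := Ideal.mem_sup_left (Ideal.subset_span (by simp))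
  have mz : z ∈ Ideal.span {x, y, z} ⊔ D := Ideal.mem_sup_left (Ideal.subset_span (by simp))
  have mD : ∀ d ∈ D, d ∈ Ideal.span {x, y, z} ⊔ D := fun d hd => Ideal.mem_sup_right hd
  have r1 : r ∈ D ⊔ Ideal.span {x} ⊔ Ideal.span {y} := h3 r (by
    refine mem_sup_span.2 ⟨-q, mem_sup_span.2 ⟨-p, ?_⟩⟩
    convert e using 1; ring)
  obtain ⟨β, hβ⟩ := mem_sup_span.1 r1
  obtain ⟨α, hα⟩ := mem_sup_span.1 hβ
  have q1 : q + β * z ∈ D ⊔ Ideal.span {x} := h2 _ (by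
    refine mem_sup_span.2 ⟨-(p + α * z), ?_⟩
    have := D.sub_mem e (D.mul_mem_right z hα)
    convert this using 1; ring)
  obtain ⟨γ, hγ⟩ := mem_sup_span.1 q1
  have p1 : p + α * z + γ * y ∈ D := h1 _ (by
    have := D.sub_mem (D.sub_mem e (D.mul_mem_right z hα)) (D.mul_mem_right y hγ)
    convert this using 1; ring)
  generalize hE : Ideal.span {x, y, z} ⊔ D = E at *
  refine ⟨?_, ?_, ?_⟩
  · have := E.sub_mem (E.sub_mem (mD _ p1) (E.mul_mem_left α mz)) (E.mul_mem_left γ my)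
    convert this using 1; ring
  · have := E.sub_mem (E.add_mem (mD _ hγ) (E.mul_mem_right γ mx)) (E.mul_mem_left β mz)
    convert this using 1; ring
  · have := E.add_mem (E.add_mem (mD _ hα) (E.mul_mem_right α mx)) (E.mul_mem_right β my)
    convert this using 1; ring

lemma mem_map_iff {S : Type*} [CommRing S] {π : R →+* S} (hπ : Function.Surjective π)
    (A : Ideal R) (a : R) : π a ∈ A.map π ↔ a ∈ A ⊔ RingHom.ker π := by
  rw [← Ideal.mem_comap, Ideal.comap_map_of_surjective' π hπ]

variable [IsLocalRing R] [IsNoetherianRing R]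
local notation "𝔫" => IsLocalRing.maximalIdeal R

section
variable {S : Type u} [CommRing S] [IsLocalRing S]

lemma pi_mem {π : R →+* S} (hk : RingHom.ker π ≤ 𝔫) (hπ : Function.Surjective π) {a : R} :
    π a ∈ IsLocalRing.maximalIdeal S ↔ a ∈ 𝔫 := by
  constructor
  · intro h
    by_contra h'
    rw [IsLocalRing.mem_maximalIdeal, mem_nonunits_iff, not_not] at h'
    exact h (h'.map π)
  · intro h
    rw [IsLocalRing.mem_maximalIdeal, mem_nonunits_iff]
    intro hu
    obtain ⟨s, hs⟩ := hu.exists_right_inv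
    obtain ⟨s, rfl⟩ := hπ s
    have h1 : 1 - a * s ∈ RingHom.ker π := by
      rw [RingHom.mem_ker, map_sub, map_mul, hs, map_one, sub_self]
    have : (1 : R) ∈ 𝔫 := by
      have := (𝔫).add_mem (hk h1) ((𝔫).mul_mem_right s h)
      simpa using this
    exact (Ideal.ne_top_iff_one _).1 (IsLocalRing.maximalIdeal.isMaximal R).ne_top this

lemma max_eq_map {π : R →+* S} (hk : RingHom.ker π ≤ 𝔫) (hπ : Function.Surjective π) :
    IsLocalRing.maximalIdeal S = (𝔫).map π := by
  apply le_antisymm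
  · intro s hs
    obtain ⟨a, rfl⟩ := hπ s
    exact Ideal.mem_map_of_mem _ ((pi_mem hk hπ).1 hs)
  · rw [Ideal.map_le_iff_le_comap]
    intro a ha
    exact (pi_mem hk hπ).2 ha

lemma exc_map [IsNoetherianRing S] {π : R →+* S} (hk : RingHom.ker π ≤ 𝔫)
    (hπ : Function.Surjective π)
    {x y z : R} {I J : Ideal R} (hXI : Ideal.span {x, y, z} ≤ I)
    {n : ℕ} (hn : 𝔫 ^ n ≤ Ideal.span {x, y, z} ⊔ RingHom.ker π)
    (hP : P1 (Ideal.span {x, y, z} ⊔ RingHom.ker π)) (hR : Reg [x, y, z] (RingHom.ker π))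
    (hJ : Submodule.colon (Ideal.span {x, y, z} ⊔ RingHom.ker π)
      ((I ⊔ RingHom.ker π : Ideal R) : Set R) = J ⊔ RingHom.ker π)
    (hE : Exc (I.map π)) : Exc (J.map π) := by
  have mm := mem_map_iff hπ
  have hmax : ∀ {a : R}, π a ∈ IsLocalRing.maximalIdeal S ↔ a ∈ 𝔫 := pi_mem hk hπ
  set X := Ideal.span {x, y, z} with hX
  have hx : x ∈ X := Ideal.subset_span (by simp)
  have hy : y ∈ X := Ideal.subset_span (by simp)
  have hz : z ∈ X := Ideal.subset_span (by simp)
  have key := exc_link (X := X.map π) (I := I.map π) (Ideal.map_mono hXI)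
    ![⟨π x, Ideal.mem_map_of_mem _ hx⟩, ⟨π y, Ideal.mem_map_of_mem _ hy⟩,
      ⟨π z, Ideal.mem_map_of_mem _ hz⟩] ?_ ?_ (n := n) ?_ ?_ hE
  · convert key using 1
    ext s
    obtain ⟨c, rfl⟩ := hπ s
    rw [mem_col, mm, ← hJ, mem_col]
    constructor
    · intro h a ha
      obtain ⟨a, rfl⟩ := hπ a
      rw [← map_mul, mm]
      exact h a ((mm _ _).1 ha)
    · intro h a ha
      rw [← mm, map_mul]
      exact h _ ((mm _ _).2 ha)
  · intro a ha
    rw [hX, Ideal.map_span] at ha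
    have e : π '' {x, y, z} = {π x, π y, π z} := by simp [Set.image_insert_eq]
    rw [e, Ideal.mem_span_insert] at ha
    obtain ⟨p, w, hw, rfl⟩ := ha
    rw [Ideal.mem_span_pair] at hw
    obtain ⟨q, r, rfl⟩ := hw
    exact ⟨![p, q, r], by simp [Fin.sum_univ_three, add_assoc]⟩
  · intro c hc
    choose c' hc' using fun k => hπ (c k)
    simp only [Fin.sum_univ_three, ← hc'] at hc
    have h0 : c' 0 * x + c' 1 * y + c' 2 * z ∈ RingHom.ker π := by
      rw [RingHom.mem_ker]; simpa using hc
    obtain ⟨k0, k1, k2⟩ := koszul hR h0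
    refine fa3 ?_ ?_ ?_
    · rw [← hc', mm]; exact k0
    · rw [← hc', mm]; exact k1
    · rw [← hc', mm]; exact k2
  · rw [max_eq_map hk hπ, ← Ideal.map_pow]
    refine (Ideal.map_mono hn).trans ?_
    rw [Ideal.map_sup]
    refine sup_le le_rfl ?_
    rw [Ideal.map_le_iff_le_comap]
    intro a ha
    rw [Ideal.mem_comap, RingHom.mem_ker.1 ha]
    exact Ideal.zero_mem _
  · intro u v hu hv hne
    obtain ⟨u, rfl⟩ := hπ u
    obtain ⟨v, rfl⟩ := hπ v
    obtain ⟨r, hr⟩ := hP u v (fun r hr => by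
      rw [← mm, map_mul]; exact hu _ (hmax.2 hr)) (fun r hr => by
      rw [← mm, map_mul]; exact hv _ (hmax.2 hr)) (fun h => hne ((mm _ _).2 h))
    exact ⟨π r, by rw [← map_mul, ← map_sub, mm]; exact hr⟩
end

lemma reg_rots {t : List R} (ht : ∀ y ∈ t, y ∈ 𝔫) : ∀ {L : List R} {K : Ideal R}, Reg (t ++ L) K →
    Reg (L ++ t) K := by
  induction t with
  | nil => intro L K h; simpa using h
  | cons a t ih =>
    intro L K h
    have : Reg (t ++ L ++ [a]) K := reg_rot (ht a (by simp)) h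
    rw [List.append_assoc] at this
    have := ih (fun y hy => ht y (by simp [hy])) this
    simpa using this

lemma ofList_three (x y z : R) : Ideal.ofList [x, y, z] = Ideal.span {x, y, z} := by
  unfold Ideal.ofList
  congr 1
  ext a; simp

/-- a good list for a collection of triples -/
def GoodFor (N : ℕ) (T : List (List R)) (L : List R) : Prop :=
  ∀ t ∈ T, Reg (t ++ L) ⊥ ∧ (t ++ L).length = N

lemma chain {X : List R} (hX : Reg X ⊥) (hXm : Ideal.ofList X = 𝔫) {I J : Ideal R}
    (h : Linked I J) : ∃ T : List (List R),
      (∀ t ∈ T, t.length = 3 ∧ Reg t ⊥ ∧ ∀ y ∈ t, y ∈ 𝔫) ∧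
      ∀ L : List R, (∀ y ∈ L, y ∈ 𝔫) → GoodFor X.length T L → Reg L I → Reg L J ∧
        (Exc (I.map (Ideal.Quotient.mk (Ideal.ofList L))) →
          Exc (J.map (Ideal.Quotient.mk (Ideal.ofList L)))) := by
  unfold Linked at h
  induction h with
  | refl => exact ⟨[], by simp, fun L _ _ h => ⟨h, id⟩⟩
  | tail h1 h2 ih =>
    rename_i B C
    obtain ⟨T, hT, ih⟩ := ih
    obtain ⟨x, y, z, hx, hy, hz, hreg, rfl⟩ := h2
    have ht𝔫 : ∀ a ∈ [x, y, z], a ∈ 𝔫 := by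
      intro a ha
      apply IsLocalRing.le_maximalIdeal (J := Ideal.ofList [x, y, z])
      · intro htop
        have := hreg.top_ne_smul
        rw [htop] at this
        simp at this
      · exact Ideal.subset_span ha
    refine ⟨[x, y, z] :: T, ?_, ?_⟩
    · intro t ht
      rcases List.mem_cons.1 ht with rfl | ht
      · exact ⟨rfl, reg_of_weak hreg.1, ht𝔫⟩
      · exact hT t ht
    · intro L hL hG hLI
      obtain ⟨hLB, hE⟩ := ih L hL (fun t ht => hG t (by simp [ht])) hLI
      obtain ⟨g1, g2⟩ := hG [x, y, z] (by simp)
      have hm : ∀ a ∈ [x, y, z] ++ L, a ∈ 𝔫 := by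
        intro a ha
        rcases List.mem_append.1 ha with ha | ha
        · exact ht𝔫 a ha
        · exact hL a ha
      have hP := P1_of_length hX hXm g1 hm g2
      obtain ⟨n, hn⟩ := artin_of_length hX hXm g1 hm g2
      have eo : Ideal.ofList ([x, y, z] ++ L) = Ideal.span {x, y, z} ⊔ Ideal.ofList L := by
        rw [Ideal.ofList_append, ofList_three]
      rw [eo] at hP hn
      have hXB : Ideal.span {x, y, z} ≤ B := by
        rw [Ideal.span_le]
        rintro a (rfl | rfl | rfl) <;> assumption
      have hLX : Reg L (Ideal.span {x, y, z}) := by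
        have := (reg_append _ _ _).1 g1
        rw [bot_sup_eq, ofList_three] at this
        exact this.2
      have htL : Reg [x, y, z] (Ideal.ofList L) := by
        have := (reg_append _ _ _).1 (reg_rots ht𝔫 g1)
        rw [bot_sup_eq] at this
        exact this.2
      obtain ⟨s1, s2⟩ := spec_of_list hXB hL hLX hLB (fun A => HP_base hn hP A)
      refine ⟨s1, fun h0 => ?_⟩
      have hle : Ideal.ofList L ≤ 𝔫 := by
        rw [Ideal.ofList, Ideal.span_le]; exact hL
      haveI : Nontrivial (R ⧸ Ideal.ofList L) := Ideal.Quotient.nontrivial_iff.2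
        (fun h => (IsLocalRing.maximalIdeal.isMaximal R).ne_top (top_le_iff.1 (h ▸ hle)))
      haveI : IsLocalRing (R ⧸ Ideal.ofList L) :=
        IsLocalRing.of_surjective' (Ideal.Quotient.mk (Ideal.ofList L)) Ideal.Quotient.mk_surjective
      have kk := Ideal.mk_ker (I := Ideal.ofList L)
      exact exc_map (by rw [kk]; exact hle) Ideal.Quotient.mk_surjective hXB
        (n := n) (by rw [kk]; exact hn) (by rw [kk]; exact hP) (by rw [kk]; exact htL)
        (by rw [kk]; exact s2) (hE h0)

lemma not_exc_map {S : Type*} [CommRing S] (π : R →+* S) (x y z : R) :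
    ¬ Exc ((Ideal.span {x, y, z}).map π) := by
  rw [Ideal.map_span]
  have e : π '' {x, y, z} = {π x, π y, π z} := by simp [Set.image_insert_eq]
  rw [e]
  exact not_exc_span _ _ _
end Chain
end S9

set_option linter.unusedSectionVars false
namespace S9
section Start
universe u
variable {R : Type u} [CommRing R] [IsLocalRing R] [IsNoetherianRing R]
local notation "𝔫" => IsLocalRing.maximalIdeal R

lemma not_principal {m : Fin 6 → R} (hm : ∀ k, m k ∈ 𝔫 ^ 2)
    (hgen : ∀ a ∈ 𝔫 ^ 2, ∃ r : Fin 6 → R, a = ∑ k, r k * m k)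
    (hmin : ∀ r : Fin 6 → R, ∑ k, r k * m k = 0 → ∀ k, r k ∈ 𝔫) (y : R) (hy : y ∈ 𝔫) :
    ¬ 𝔫 ≤ Ideal.span {y} ⊔ 𝔫 ^ 2 := by
  intro h
  have one : (1 : R) ∉ 𝔫 := (Ideal.ne_top_iff_one _).1 (IsLocalRing.maximalIdeal.isMaximal R).ne_top
  have e1 : 𝔫 ≤ Ideal.span {y} := by
    apply Submodule.le_of_le_smul_of_le_jacobson_bot (I := 𝔫) (IsNoetherian.noetherian _)
      (IsLocalRing.maximalIdeal_le_jacobson ⊥)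
    rw [smul_eq_mul, ← pow_two]; exact h
  have e2 : ∀ a ∈ 𝔫 ^ 2, ∃ s, a = s * y ^ 2 := by
    intro a ha
    have : a ∈ Ideal.span {y} ^ 2 := Ideal.pow_right_mono e1 2 ha
    rw [Ideal.span_singleton_pow] at this
    obtain ⟨s, hs⟩ := Ideal.mem_span_singleton'.1 this
    exact ⟨s, hs.symm⟩
  choose s hs using fun k => e2 _ (hm k)
  have key : ∀ i j, i ≠ j → s i ∈ 𝔫 := by
    intro i j hij
    have := hmin (fun k => if k = i then s j else if k = j then - s i else 0) (by
      have : ∀ k, (if k = i then s j else if k = j then - s i else 0) * m k =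
        (if k = i then s j * m i else 0) + (if k = j then - s i * m j else 0) := by
        intro k
        by_cases h1 : k = i
        · subst h1; simp [hij]
        · by_cases h2 : k = j
          · subst h2; simp [h1]
          · simp [h1, h2]
      simp only [this, Finset.sum_add_distrib, Finset.sum_ite_eq', Finset.mem_univ, if_true]
      rw [hs i, hs j]; ring) j
    simp only [hij.symm, if_false, if_true] at this
    simpa using (𝔫).neg_mem this
  have hsm : ∀ k, s k ∈ 𝔫 := fun k => by
    by_cases h0 : k = 0
    · exact key k 1 (by rw [h0]; decide)
    · exact key k 0 h0
  obtain ⟨r, hr⟩ := hgen (y ^ 2) (Ideal.pow_mem_pow hy 2)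
  have hy2 : y ^ 2 = 0 := by
    have h3 : y ^ 2 = (∑ k, r k * s k) * y ^ 2 := by
      conv_lhs => rw [hr]
      rw [Finset.sum_mul]
      refine Finset.sum_congr rfl fun k _ => ?_
      rw [mul_assoc, ← hs k]
    have h4 : (∑ k, r k * s k) ∈ 𝔫 := Ideal.sum_mem _ fun k _ => (𝔫).mul_mem_left _ (hsm k)
    have h5 : IsUnit (1 - ∑ k, r k * s k) := by
      by_contra hu
      apply one
      have := (𝔫).add_mem ((IsLocalRing.mem_maximalIdeal _).2 hu) h4
      simpa using this
    apply h5.mul_right_eq_zero.1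
    rw [sub_mul, one_mul, ← h3, sub_self]
  refine one (hmin (fun _ => 1) ?_ 0)
  refine Finset.sum_eq_zero fun k _ => ?_
  rw [hs k, hy2]; simp

lemma exc_sq {I : Ideal R} {m : Fin 6 → R} (hI : I = 𝔫 ^ 2) (hm : ∀ k, m k ∈ I)
    (hgen : ∀ a ∈ I, ∃ r : Fin 6 → R, a = ∑ k, r k * m k)
    (hmin : ∀ r : Fin 6 → R, ∑ k, r k * m k = 0 → ∀ k, r k ∈ 𝔫) : Exc I := by
  have hle : I ≤ 𝔫 := by rw [hI]; exact Ideal.pow_le_self two_ne_zero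
  let g : (R ⧸ I) →ₗ[R] (R ⧸ 𝔫) := Submodule.factor hle
  have hg : Function.Surjective g := Submodule.factor_surjective hle
  have hgm : ∀ c, g (Ideal.Quotient.mk I c) = Ideal.Quotient.mk 𝔫 c := fun c => rfl
  have hN : ∀ c, Ideal.Quotient.mk I c ∈ LinearMap.ker g ↔ c ∈ 𝔫 := fun c => by
    rw [LinearMap.mem_ker, hgm, Ideal.Quotient.eq_zero_iff_mem]
  have hlen := len_ker_range g
  rw [LinearMap.range_eq_top.2 hg, Module.length_top] at hlen
  haveI : IsSimpleModule R (R ⧸ 𝔫) := by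
    rw [isSimpleModule_iff_isCoatom]; exact (IsLocalRing.maximalIdeal.isMaximal R).out
  rw [Module.length_eq_one (R := R) (M := R ⧸ 𝔫)] at hlen
  -- lower bound
  let Ev : (I →ₗ[R] (R ⧸ I)) →ₗ[R] (Fin 6 → R ⧸ I) :=
    LinearMap.pi fun k => LinearMap.applyₗ ⟨m k, hm k⟩
  let T : (Fin 6 → R) →ₗ[R] I := Fintype.linearCombination R (fun k => (⟨m k, hm k⟩ : I))
  have hT : ∀ c, ((T c : I) : R) = ∑ k, c k * m k := fun c => by
    simp [T, Fintype.linearCombination_apply]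
  have hTs : Function.Surjective T := by
    intro a
    obtain ⟨c, hc⟩ := hgen a a.2
    exact ⟨c, Subtype.ext (by rw [hT, hc])⟩
  have hsub : ∀ n : Fin 6 → LinearMap.ker g, (fun k => (n k : R ⧸ I)) ∈ LinearMap.range Ev := by
    intro n
    let U : (Fin 6 → R) →ₗ[R] (R ⧸ I) := Fintype.linearCombination R (fun k => (n k : R ⧸ I))
    have hU : LinearMap.ker T ≤ LinearMap.ker U := by
      intro c hc
      rw [LinearMap.mem_ker] at hc ⊢
      have h0 := hmin c (by rw [← hT, hc]; rfl)
      simp only [U, Fintype.linearCombination_apply]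
      refine Finset.sum_eq_zero fun k _ => ?_
      obtain ⟨s, hs⟩ := Ideal.Quotient.mk_surjective (n k : R ⧸ I)
      have hs' : s ∈ 𝔫 := by rw [← hN, hs]; exact (n k).2
      rw [← hs, mk_smul_eq, Ideal.Quotient.eq_zero_iff_mem, hI, pow_two]
      exact Ideal.mul_mem_mul (h0 k) hs'
    refine ⟨(LinearMap.ker T).liftQ U hU ∘ₗ (T.quotKerEquivOfSurjective hTs).symm.toLinearMap, ?_⟩
    funext k
    have : (⟨m k, hm k⟩ : I) = T.quotKerEquivOfSurjective hTs
        (Submodule.Quotient.mk (Pi.single k 1)) :=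
      Subtype.ext (by
        change m k = ((T (Pi.single k 1) : I) : R)
        rw [hT]; simp [Pi.single_apply])
    change ((LinearMap.ker T).liftQ U hU ∘ₗ (T.quotKerEquivOfSurjective hTs).symm.toLinearMap)
      ⟨m k, hm k⟩ = _
    rw [LinearMap.comp_apply, this]
    simp only [LinearEquiv.coe_coe, LinearEquiv.symm_apply_apply]
    change U (Pi.single k 1) = _
    simp only [U, Fintype.linearCombination_apply]
    simp [Pi.single_apply]
  have b1 : Module.length R (Fin 6 → LinearMap.ker g) ≤ Module.length R (LinearMap.range Ev) := by
    refine Module.length_le_of_injective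
      (LinearMap.codRestrict (LinearMap.range Ev)
        (LinearMap.pi fun k => (LinearMap.ker g).subtype ∘ₗ LinearMap.proj k) hsub) ?_
    intro p q h
    funext k
    exact Subtype.ext (congrFun (congrArg Subtype.val h) k)
  have b2 : Module.length R (LinearMap.range Ev) ≤ Module.length R (I →ₗ[R] (R ⧸ I)) :=
    Module.length_le_of_surjective Ev.rangeRestrict Ev.surjective_rangeRestrict
  have b3 : Module.length R (Fin 6 → LinearMap.ker g) = 6 * Module.length R (LinearMap.ker g) := by
    simp [Module.length_pi_of_fintype]
  have hfin : Module.length R (LinearMap.ker g) ≠ ⊤ := by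
    have h1 : IsFiniteLength R (R ⧸ I) := finlen_of_pow (n := 2) (by rw [hI])
    intro h
    rw [h, top_add] at hlen
    exact Module.length_ne_top_iff.2 h1 hlen
  have np := fun y hy => not_principal (hI ▸ hm) (hI ▸ hgen) hmin y hy
  have h2 : 2 ≤ Module.length R (LinearMap.ker g) := by
    by_contra hlt
    obtain ⟨y, hy, hle⟩ : ∃ y ∈ 𝔫, ∀ w ∈ LinearMap.ker g, ∃ r : R, w = r • Ideal.Quotient.mk I y := by
      have : Module.length R (LinearMap.ker g) = 0 ∨ Module.length R (LinearMap.ker g) = 1 := by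
        generalize Module.length R (LinearMap.ker g) = ν at hlt hfin
        lift ν to ℕ using hfin
        norm_cast at hlt ⊢
        omega
      rcases this with h | h
      · rw [Module.length_eq_zero_iff] at h
        refine ⟨0, zero_mem _, fun w hw => ⟨0, ?_⟩⟩
        have := congrArg Subtype.val (Subsingleton.elim (⟨w, hw⟩ : LinearMap.ker g) 0)
        simpa using this
      · rw [Module.length_eq_one_iff] at h
        haveI : Nontrivial (LinearMap.ker g) := IsSimpleModule.nontrivial R _
        obtain ⟨v, hv⟩ := exists_ne (0 : LinearMap.ker g)
        obtain ⟨y, hy⟩ := Ideal.Quotient.mk_surjective (v : R ⧸ I)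
        refine ⟨y, (hN y).1 (by rw [hy]; exact v.2), fun w hw => ?_⟩
        obtain ⟨r, hr⟩ := IsSimpleModule.toSpanSingleton_surjective R hv ⟨w, hw⟩
        exact ⟨r, by rw [hy]; exact (congrArg Subtype.val hr).symm⟩
    refine np y hy fun a ha => ?_
    obtain ⟨r, hr⟩ := hle _ ((hN a).2 ha)
    rw [mk_smul_eq, Ideal.Quotient.eq] at hr
    rw [hI] at hr
    have := Ideal.add_mem _ (Ideal.mem_sup_left (T := 𝔫 ^ 2) (Ideal.mul_mem_left _ r (Ideal.mem_span_singleton_self y)))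
      (Ideal.mem_sup_right hr)
    simpa using this
  unfold Exc
  refine lt_of_lt_of_le ?_ ((b3 ▸ b1).trans b2)
  rw [hlen]
  generalize Module.length R (LinearMap.ker g) = ν at h2 hfin
  lift ν to ℕ using hfin
  norm_cast at h2 ⊢
  omega

lemma d1_eq (a b : Fin 4 → R) (u : Fin 6 → R) :
    d1 a b u = ∑ k, u k * d1 a b (Pi.single k 1) := by
  conv_lhs => rw [LinearMap.pi_apply_eq_sum_univ (d1 a b) u]
  refine Finset.sum_congr rfl fun k _ => ?_
  rw [smul_eq_mul]
  congr 2
  funext j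
  simp [Pi.single_apply, eq_comm]

lemma exc_start {K : Type*} [Field K] [Algebra K R] {y : Fin 3 → R}
    (hy : 𝔫 = Ideal.span (Set.range y)) {a b : Fin 4 → R}
    (ha : ∀ i, a i ∈ Submodule.span K (Set.range y))
    (hb : ∀ i, b i ∈ Submodule.span K (Set.range y))
    (hE : ∀ r : Fin 6 → R, d1 a b r = 0 → ∀ k, r k ∈ 𝔫) :
    Exc (LinearMap.range (d1 a b) : Ideal R) := by
  let m : Fin 6 → R := fun k => d1 a b (Pi.single k 1)
  have hd : ∀ u, d1 a b u = ∑ k, u k * m k := d1_eq a b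
  let q : Fin 6 → R := ![y 0 * y 0, y 0 * y 1, y 0 * y 2, y 1 * y 1, y 1 * y 2, y 2 * y 2]
  let W : Submodule K R := Submodule.span K (Set.range q)
  have hyW : ∀ i j, y i * y j ∈ W := by
    have key : ∀ k, q k ∈ W := fun k => Submodule.subset_span ⟨k, rfl⟩
    have k0 : y 0 * y 0 ∈ W := key 0
    have k1 : y 0 * y 1 ∈ W := key 1
    have k2 : y 0 * y 2 ∈ W := key 2
    have k3 : y 1 * y 1 ∈ W := key 3
    have k4 : y 1 * y 2 ∈ W := key 4
    have k5 : y 2 * y 2 ∈ W := key 5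
    have k1' : y 1 * y 0 ∈ W := by rw [mul_comm]; exact k1
    have k2' : y 2 * y 0 ∈ W := by rw [mul_comm]; exact k2
    have k4' : y 2 * y 1 ∈ W := by rw [mul_comm]; exact k4
    refine fa3 (fa3 k0 k1 k2) (fa3 k1' k3 k4) (fa3 k2' k4' k5)
  have hmul : ∀ s ∈ Submodule.span K (Set.range y), ∀ t ∈ Submodule.span K (Set.range y),
      s * t ∈ W := by
    intro s hs t ht
    obtain ⟨c, rfl⟩ := (Submodule.mem_span_range_iff_exists_fun K).1 hs
    obtain ⟨d, rfl⟩ := (Submodule.mem_span_range_iff_exists_fun K).1 ht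
    rw [Finset.sum_mul_sum]
    refine W.sum_mem fun i _ => W.sum_mem fun j _ => ?_
    rw [smul_mul_smul_comm]
    exact W.smul_mem _ (hyW i j)
  have hmW : ∀ k, m k ∈ W := by
    have h2 : ∀ i j, a i * b j - a j * b i ∈ W := fun i j =>
      W.sub_mem (hmul _ (ha i) _ (hb j)) (hmul _ (ha j) _ (hb i))
    apply fa6 <;> simp [m, d1, Pi.single_apply, h2]
  have hli : LinearIndependent K m := by
    rw [Fintype.linearIndependent_iff]
    intro c hc k
    have := hE (fun k => algebraMap K R (c k)) (by
      rw [hd, ← hc]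
      exact Finset.sum_congr rfl fun k _ => (Algebra.smul_def _ _).symm) k
    by_contra hne
    exact this ((isUnit_iff_ne_zero.2 hne).map (algebraMap K R))
  have hle : Submodule.span K (Set.range m) ≤ W := by
    rw [Submodule.span_le]; rintro _ ⟨k, rfl⟩; exact hmW k
  haveI : Module.Finite K W := Module.Finite.span_of_finite K (Set.finite_range q)
  have heq : Submodule.span K (Set.range m) = W := by
    apply Submodule.eq_of_le_of_finrank_le hle
    rw [finrank_span_eq_card hli]
    exact finrank_range_le_card q
  have hspanI : ∀ w ∈ W, w ∈ LinearMap.range (d1 a b) := by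
    intro w hw
    rw [← heq] at hw
    obtain ⟨c, rfl⟩ := (Submodule.mem_span_range_iff_exists_fun K).1 hw
    refine ⟨fun k => algebraMap K R (c k), ?_⟩
    rw [hd]
    exact Finset.sum_congr rfl fun k _ => (Algebra.smul_def _ _).symm
  have hyn : ∀ s ∈ Submodule.span K (Set.range y), s ∈ 𝔫 := by
    intro s hs
    obtain ⟨c, rfl⟩ := (Submodule.mem_span_range_iff_exists_fun K).1 hs
    refine Ideal.sum_mem _ fun i _ => ?_
    rw [Algebra.smul_def]
    refine Ideal.mul_mem_left _ _ ?_
    rw [hy]; exact Ideal.subset_span ⟨i, rfl⟩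
  have hWn : ∀ w ∈ W, w ∈ 𝔫 ^ 2 := by
    intro w hw
    obtain ⟨c, rfl⟩ := (Submodule.mem_span_range_iff_exists_fun K).1 hw
    refine Ideal.sum_mem _ fun i _ => ?_
    rw [Algebra.smul_def]
    refine Ideal.mul_mem_left _ _ ?_
    have h0 : ∀ i j, y i * y j ∈ 𝔫 ^ 2 := fun i j => by
      rw [pow_two]
      exact Ideal.mul_mem_mul (hyn _ (Submodule.subset_span ⟨i, rfl⟩))
        (hyn _ (Submodule.subset_span ⟨j, rfl⟩))
    revert i
    apply fa6 <;> simp [q, h0]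
  refine exc_sq (m := m) (le_antisymm ?_ ?_) (fun k => ⟨_, rfl⟩) ?_ (fun r hr => hE r (by rw [hd]; exact hr))
  · rintro _ ⟨u, rfl⟩
    rw [hd]
    exact Ideal.sum_mem _ fun k _ => Ideal.mul_mem_left _ _ (hWn _ (hmW k))
  · conv_lhs => rw [hy]
    rw [pow_two, Ideal.span_mul_span', Ideal.span_le]
    rintro _ ⟨_, ⟨i, rfl⟩, _, ⟨j, rfl⟩, rfl⟩
    exact hspanI _ (hyW i j)
  · rintro _ ⟨u, rfl⟩
    exact ⟨u, hd u⟩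
end Start
end S9

set_option linter.unusedSectionVars false
namespace S9
section Local
universe u
variable {R : Type u} [CommRing R] [IsLocalRing R] [IsNoetherianRing R]
local notation "𝔫" => IsLocalRing.maximalIdeal R

lemma pick {K : Type*} [Field K] [Infinite K] [Algebra K R] {V : Submodule K R}
    (hV : Ideal.span (V : Set R) = 𝔫) {A : Set (Ideal R)} (hA : A.Finite)
    (h : ∀ P ∈ A, ¬ 𝔫 ≤ P) : ∃ l ∈ V, ∀ P ∈ A, l ∉ P := by
  classical
  let F : Ideal R → Subspace K V := fun P => (P.restrictScalars K).comap V.subtype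
  have hF : ∀ P (v : V), v ∈ F P ↔ (v : R) ∈ P := fun P v => Iff.rfl
  let s : Finset (Subspace K V) := hA.toFinset.image F
  have hs : ⊤ ∉ s := by
    intro ht
    obtain ⟨P, hP, hPt⟩ := Finset.mem_image.1 ht
    apply h P (hA.mem_toFinset.1 hP)
    rw [← hV, Ideal.span_le]
    intro v hv
    exact (hF P ⟨v, hv⟩).1 (by rw [hPt]; trivial)
  have := Subspace.biUnion_ne_univ_of_top_notMem hs
  rw [Set.ne_univ_iff_exists_notMem] at this
  obtain ⟨l, hl⟩ := this
  refine ⟨l, l.2, fun P hP hlP => hl ?_⟩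
  simp only [Set.mem_iUnion]
  exact ⟨F P, Finset.mem_image.2 ⟨P, hA.mem_toFinset.2 hP, rfl⟩, hlP⟩

lemma exists_list {K : Type*} [Field K] [Infinite K] [Algebra K R] {V : Submodule K R}
    (hV : Ideal.span (V : Set R) = 𝔫) {X : List R} (hX : Reg X ⊥) (hXm : Ideal.ofList X = 𝔫)
    (T : List (List R)) (hT : ∀ t ∈ T, t.length = 3 ∧ Reg t ⊥ ∧ ∀ y ∈ t, y ∈ 𝔫) :
    ∀ m, 3 + m ≤ X.length → ∃ L : List R, L.length = m ∧ (∀ y ∈ L, y ∈ V) ∧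
      ∀ t ∈ T, Reg (t ++ L) ⊥ := by
  have hVn : ∀ v ∈ V, v ∈ 𝔫 := fun v hv => by rw [← hV]; exact Ideal.subset_span hv
  intro m
  induction m with
  | zero => exact fun _ => ⟨[], rfl, by simp, fun t ht => by simpa using (hT t ht).2.1⟩
  | succ m ih =>
    intro hm
    obtain ⟨L, hL1, hL2, hL3⟩ := ih (by omega)
    let A : Set (Ideal R) := ⋃ t ∈ {t | t ∈ T}, associatedPrimes R (R ⧸ Ideal.ofList (t ++ L))
    have hA : A.Finite := Set.Finite.biUnion (List.finite_toSet T)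
      (fun t _ => associatedPrimes.finite R _)
    obtain ⟨l, hlV, hl⟩ := pick hV hA (by
      intro P hP
      simp only [A, Set.mem_iUnion] at hP
      obtain ⟨t, ht, hP⟩ := hP
      refine not_max_of_P0 (P0_of_length hX hXm (hL3 t ht) ?_ ?_) hP
      · intro a ha
        rcases List.mem_append.1 ha with ha | ha
        · exact (hT t ht).2.2 a ha
        · exact hVn _ (hL2 a ha)
      · rw [List.length_append, (hT t ht).1, hL1]; omega)
    refine ⟨L ++ [l], by simp [hL1], ?_, ?_⟩
    · intro y hy
      rcases List.mem_append.1 hy with hy | hy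
      · exact hL2 y hy
      · rw [List.mem_singleton.1 hy]; exact hlV
    · intro t ht
      rw [← List.append_assoc, reg_append]
      refine ⟨hL3 t ht, ?_, trivial⟩
      rw [bot_sup_eq]
      refine reg_of_notMem fun P hP => hl P ?_
      simp only [A, Set.mem_iUnion]
      exact ⟨t, ht, hP⟩

lemma d1_mem' (a b : Fin 4 → R) {D : Ideal R} {u : Fin 6 → R} (h : ∀ i, u i ∈ D) :
    d1 a b u ∈ D := by
  rw [d1_eq]
  exact Ideal.sum_mem _ fun k _ => Ideal.mul_mem_right _ _ (h k)

lemma reg_start {Φ : Matrix (Fin 2) (Fin 4) R} {x y z : R} (hx : x ∈ minors2 Φ)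
    (hy : y ∈ minors2 Φ) (hz : z ∈ minors2 Φ) (hm : ∀ a ∈ [x, y, z], a ∈ 𝔫) {L : List R}
    (h : Reg ([x, y, z] ++ L) ⊥) :
    Reg L (minors2 Φ) := by
  induction L using List.reverseRecOn with
  | nil => trivial
  | append_singleton L l ih =>
    rw [reg_append]
    refine ⟨ih ?_, ?_, trivial⟩
    · rw [← List.append_assoc, reg_append] at h; exact h.1
    have h' := reg_rots hm h
    rw [reg_append, reg_append, bot_sup_eq, bot_sup_eq] at h'
    obtain ⟨⟨-, hl, -⟩, hr⟩ := h'
    rw [Ideal.ofList_append, Ideal.ofList_singleton] at hr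
    intro c hc
    rw [← range_d1] at hc ⊢
    obtain ⟨_, ⟨u, rfl⟩, κ, hκ, e⟩ := Submodule.mem_sup.1 hc
    obtain ⟨v, hv⟩ := E1 (u := u) (kill_of_mem Φ hx) (kill_of_mem Φ hy) (kill_of_mem Φ hz) hr (by
      refine mem_sup_span.2 ⟨c, ?_⟩
      rw [← e]
      have := (Ideal.ofList L).neg_mem hκ
      convert this using 1; ring)
    choose w hw using fun i => mem_sup_span.1 (hv i)
    have h1 : d1 (Φ 0) (Φ 1) u - l * d1 (Φ 0) (Φ 1) w ∈ Ideal.ofList L := by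
      have h2 := d1_mem' (Φ 0) (Φ 1) hw
      have e2 : (fun i => u i - d2 (Φ 0) (Φ 1) v i - l * w i) =
          u - d2 (Φ 0) (Φ 1) v - l • w := by funext i; simp
      rw [e2, map_sub, map_sub, d1_d2, map_smul, smul_eq_mul, sub_zero] at h2
      exact h2
    have h3 : c - d1 (Φ 0) (Φ 1) w ∈ Ideal.ofList L := hl _ (by
      have := (Ideal.ofList L).add_mem h1 hκ
      convert this using 1
      rw [mul_sub, ← e]; ring)
    have := Ideal.add_mem _ (Submodule.mem_sup_left (T := Ideal.ofList L)
      (LinearMap.mem_range_self (d1 (Φ 0) (Φ 1)) w)) (Submodule.mem_sup_right h3)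
    simpa using this

lemma linInd {K : Type*} [Field K] [Algebra K R] : ∀ {n : ℕ} (v : Fin n → R),
    Reg (List.ofFn v) ⊥ → (∀ i, v i ∈ 𝔫) → LinearIndependent K v := by
  intro n
  induction n with
  | zero => exact fun v _ _ => linearIndependent_empty_type
  | succ n ih =>
    intro v hv hm
    rw [List.ofFn_succ', List.concat_eq_append, reg_append, bot_sup_eq] at hv
    rw [linearIndependent_fin_succ']
    refine ⟨ih _ hv.1 (fun i => hm _), fun hs => ?_⟩
    have hmem : v (Fin.last n) ∈ Ideal.ofList (List.ofFn fun i : Fin n => v i.castSucc) := by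
      obtain ⟨c, hc⟩ := (Submodule.mem_span_range_iff_exists_fun K).1 hs
      rw [← hc]
      refine Ideal.sum_mem _ fun i _ => ?_
      rw [Algebra.smul_def]
      exact Ideal.mul_mem_left _ _ (Ideal.subset_span (by
        simp only [Set.mem_setOf_eq, List.mem_ofFn]; exact ⟨i, rfl⟩))
    have h1 := hv.2.1 1 (by simpa using hmem)
    have hle : Ideal.ofList (List.ofFn fun i : Fin n => v i.castSucc) ≤ 𝔫 := by
      rw [Ideal.ofList, Ideal.span_le]
      intro a ha
      simp only [Set.mem_setOf_eq, List.mem_ofFn] at ha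
      obtain ⟨i, rfl⟩ := ha
      exact hm _
    exact (Ideal.ne_top_iff_one _).1 (IsLocalRing.maximalIdeal.isMaximal R).ne_top (hle h1)

lemma exists_span3 {K M : Type*} [Field K] [AddCommGroup M] [Module K M] (W : Submodule K M)
    [Module.Finite K W] (h : Module.finrank K W ≤ 3) :
    ∃ y : Fin 3 → M, Submodule.span K (Set.range y) = W := by
  let b := Module.finBasis K W
  refine ⟨fun i => if hi : (i : ℕ) < Module.finrank K W then (b ⟨i, hi⟩ : M) else 0, ?_⟩
  apply le_antisymm
  · rw [Submodule.span_le]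
    rintro _ ⟨i, rfl⟩
    dsimp only
    split_ifs
    · exact (b _).2
    · exact W.zero_mem
  · intro w hw
    have := b.sum_repr ⟨w, hw⟩
    have h2 := congrArg Subtype.val this
    rw [← show ((⟨w, hw⟩ : W) : M) = w from rfl, ← h2]
    rw [AddSubmonoidClass.coe_finsetSum]
    refine Submodule.sum_mem _ fun j _ => ?_
    refine Submodule.smul_mem _ _ (Submodule.subset_span ⟨⟨j, by omega⟩, ?_⟩)
    simp

lemma d1_map {S : Type*} [CommRing S] (π : R →+* S) (a b : Fin 4 → R) (u : Fin 6 → R) :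
    π (d1 a b u) = d1 (fun i => π (a i)) (fun i => π (b i)) (fun i => π (u i)) := by
  simp [d1]

theorem not_licci_local {K : Type*} [Field K] [Infinite K] [Algebra K R] {e : ℕ} (he : 3 ≤ e)
    {X : Fin e → R} (hX : Reg (List.ofFn X) ⊥) (hXm : Ideal.span (Set.range X) = 𝔫)
    {Φ : Matrix (Fin 2) (Fin 4) R} (hΦ : ∀ i j, Φ i j ∈ Submodule.span K (Set.range X))
    {x y z : R} (hx : x ∈ minors2 Φ) (hy : y ∈ minors2 Φ) (hz : z ∈ minors2 Φ)
    (hreg : Reg [x, y, z] ⊥) : ¬ Licci (minors2 Φ) := by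
  rintro ⟨C, hlink, p, q, r, hpqr, rfl⟩
  have hXl : Ideal.ofList (List.ofFn X) = 𝔫 := by
    rw [← hXm, Ideal.ofList]
    congr 1; ext a; simp [List.mem_ofFn]
  obtain ⟨T, hT, hch⟩ := chain hX hXl hlink
  set V : Submodule K R := Submodule.span K (Set.range X) with hVdef
  have hVn : ∀ v ∈ V, v ∈ 𝔫 := by
    intro v hv
    obtain ⟨c, rfl⟩ := (Submodule.mem_span_range_iff_exists_fun K).1 hv
    refine Ideal.sum_mem _ fun i _ => ?_
    rw [Algebra.smul_def]
    refine Ideal.mul_mem_left _ _ ?_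
    rw [← hXm]; exact Ideal.subset_span ⟨i, rfl⟩
  have hV : Ideal.span (V : Set R) = 𝔫 := by
    apply le_antisymm
    · rw [Ideal.span_le]; exact hVn
    · rw [← hXm]; exact Ideal.span_mono Submodule.subset_span
  have hIn : minors2 Φ ≤ 𝔫 := by
    rw [← range_d1]
    rintro _ ⟨u, rfl⟩
    have h2 : ∀ i j, Φ 0 i * Φ 1 j - Φ 0 j * Φ 1 i ∈ 𝔫 := fun i j =>
      (𝔫).sub_mem ((𝔫).mul_mem_right _ (hVn _ (hΦ _ _))) ((𝔫).mul_mem_right _ (hVn _ (hΦ _ _)))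
    simp only [d1, LinearMap.coe_mk, AddHom.coe_mk]
    exact Ideal.add_mem _ (Ideal.add_mem _ (Ideal.add_mem _ (Ideal.add_mem _ (Ideal.add_mem _
      (Ideal.mul_mem_right _ _ (h2 _ _)) (Ideal.mul_mem_right _ _ (h2 _ _)))
      (Ideal.mul_mem_right _ _ (h2 _ _))) (Ideal.mul_mem_right _ _ (h2 _ _)))
      (Ideal.mul_mem_right _ _ (h2 _ _))) (Ideal.mul_mem_right _ _ (h2 _ _))
  have hxyz : ∀ a ∈ [x, y, z], a ∈ 𝔫 := by
    intro a ha
    simp only [List.mem_cons, List.not_mem_nil, or_false] at ha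
    rcases ha with rfl | rfl | rfl
    · exact hIn hx
    · exact hIn hy
    · exact hIn hz
  obtain ⟨L, hL1, hL2, hL3⟩ := exists_list hV hX hXl ([x, y, z] :: T) (by
    intro t ht
    rcases List.mem_cons.1 ht with rfl | ht
    · exact ⟨rfl, hreg, hxyz⟩
    · exact hT t ht) (e - 3) (by simp; omega)
  have hLn : ∀ a ∈ L, a ∈ 𝔫 := fun a ha => hVn _ (hL2 a ha)
  have hgood : GoodFor (List.ofFn X).length T L := by
    intro t ht
    refine ⟨hL3 t (by simp [ht]), ?_⟩
    rw [List.length_append, (hT t ht).1, hL1]; simp; omega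
  have h0 := hL3 [x, y, z] (by simp)
  obtain ⟨-, hE⟩ := hch L hLn hgood (reg_start hx hy hz hxyz h0)
  refine not_exc_map _ p q r (hE ?_)
  have hrot := reg_rots hxyz h0
  rw [reg_append, bot_sup_eq] at hrot
  obtain ⟨hLreg, htD⟩ := hrot
  clear hE hch hgood hL3
  set D := Ideal.ofList L with hD
  have hle : D ≤ 𝔫 := by
    rw [hD, Ideal.ofList, Ideal.span_le]; exact hLn
  haveI : Nontrivial (R ⧸ D) := Ideal.Quotient.nontrivial_iff.2
    (fun h => (IsLocalRing.maximalIdeal.isMaximal R).ne_top (top_le_iff.1 (h ▸ hle)))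
  haveI : IsLocalRing (R ⧸ D) :=
    IsLocalRing.of_surjective' (Ideal.Quotient.mk D) Ideal.Quotient.mk_surjective
  have hk : RingHom.ker (Ideal.Quotient.mk D) ≤ 𝔫 := by rw [Ideal.mk_ker]; exact hle
  have hsur : Function.Surjective (Ideal.Quotient.mk D) := Ideal.Quotient.mk_surjective
  -- three generators
  let f : V →ₗ[K] (R ⧸ D) := (Ideal.Quotient.mkₐ K D).toLinearMap ∘ₗ V.subtype
  have hf : ∀ v : V, f v = Ideal.Quotient.mk D v := fun v => rfl
  haveI : Module.Finite K V := Module.Finite.span_of_finite K (Set.finite_range X)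
  have hrank : Module.finrank K (LinearMap.range f) ≤ 3 := by
    have h1 := f.finrank_range_add_finrank_ker
    have h2 : Module.finrank K V ≤ e := by
      have := finrank_range_le_card (R := K) X
      simpa [Set.finrank] using this
    have h3 : e - 3 ≤ Module.finrank K (LinearMap.ker f) := by
      have li : LinearIndependent K L.get := linInd L.get (by rw [List.ofFn_get]; exact hLreg)
        (fun i => hLn _ (L.get_mem i))
      let w : Fin L.length → LinearMap.ker f := fun i =>
        ⟨⟨L.get i, hL2 _ (L.get_mem i)⟩, by
          rw [LinearMap.mem_ker, hf, Ideal.Quotient.eq_zero_iff_mem]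
          exact Ideal.subset_span (L.get_mem i)⟩
      have liw : LinearIndependent K w :=
        LinearIndependent.of_comp (V.subtype ∘ₗ (LinearMap.ker f).subtype) li
      have := liw.fintype_card_le_finrank
      rw [Fintype.card_fin, hL1] at this
      exact this
    omega
  obtain ⟨Y, hY⟩ := exists_span3 _ hrank
  have hinV : ∀ v ∈ V, Ideal.Quotient.mk D v ∈ Submodule.span K (Set.range Y) := by
    intro v hv; rw [hY]; exact ⟨⟨v, hv⟩, rfl⟩
  have hmapI : (minors2 Φ).map (Ideal.Quotient.mk D) =
      LinearMap.range (d1 (fun i => Ideal.Quotient.mk D (Φ 0 i))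
        (fun i => Ideal.Quotient.mk D (Φ 1 i))) := by
    rw [← range_d1]
    apply le_antisymm
    · rw [Ideal.map_le_iff_le_comap]
      rintro _ ⟨u, rfl⟩
      rw [Ideal.mem_comap, d1_map]
      exact ⟨_, rfl⟩
    · rintro _ ⟨u, rfl⟩
      choose u' hu' using fun i => hsur (u i)
      have : u = fun i => Ideal.Quotient.mk D (u' i) := funext fun i => (hu' i).symm
      rw [this, ← d1_map]
      exact Ideal.mem_map_of_mem _ ⟨u', rfl⟩
  rw [hmapI]
  refine exc_start (K := K) (y := Y) ?_ (fun i => hinV _ (hΦ _ _)) (fun i => hinV _ (hΦ _ _)) ?_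
  · apply le_antisymm
    · rw [max_eq_map hk hsur, ← hXm, Ideal.map_span, Ideal.span_le]
      rintro _ ⟨_, ⟨i, rfl⟩, rfl⟩
      obtain ⟨c, hc⟩ := (Submodule.mem_span_range_iff_exists_fun K).1
        (hinV (X i) (Submodule.subset_span ⟨i, rfl⟩))
      rw [SetLike.mem_coe, ← hc]
      refine Ideal.sum_mem _ fun i _ => ?_
      rw [Algebra.smul_def]
      exact Ideal.mul_mem_left _ _ (Ideal.subset_span ⟨i, rfl⟩)
    · rw [Ideal.span_le]
      rintro _ ⟨i, rfl⟩
      have : Y i ∈ LinearMap.range f := by rw [← hY]; exact Submodule.subset_span ⟨i, rfl⟩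
      obtain ⟨v, hv⟩ := this
      rw [← hv, hf]
      exact (pi_mem hk hsur).2 (hVn _ v.2)
  · intro u hu k
    choose u' hu' using fun i => hsur (u i)
    have e1 : u = fun i => Ideal.Quotient.mk D (u' i) := funext fun i => (hu' i).symm
    rw [e1, ← d1_map, Ideal.Quotient.eq_zero_iff_mem] at hu
    obtain ⟨v, hv⟩ := E1 (kill_of_mem Φ hx) (kill_of_mem Φ hy) (kill_of_mem Φ hz) htD hu
    rw [← hu', pi_mem hk hsur]
    have := (𝔫).add_mem (hle (hv k)) (d2_mem (a := Φ 0) (b := Φ 1) (fun i => hVn _ (hΦ _ _))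
      (fun i => hVn _ (hΦ _ _)) v k)
    simpa using this
end Local
end S9

namespace S9
open TensorProduct

lemma mem_col' {R : Type*} [CommRing R] {K A : Ideal R} {c : R} :
    c ∈ Submodule.colon K (A : Set R) ↔ ∀ a ∈ A, c * a ∈ K := by
  simp [Submodule.mem_colon]

section flat
variable {A B : Type*} [CommRing A] [CommRing B] [Algebra A B]

lemma colon_map [IsNoetherianRing A] [Module.Flat A B] (Y I : Ideal A) :
    (Submodule.colon Y (I : Set A)).map (algebraMap A B)
      = Submodule.colon (Y.map (algebraMap A B)) ((I.map (algebraMap A B) : Ideal B) : Set B) := by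
  apply le_antisymm
  · rw [Ideal.map_le_iff_le_comap]
    intro c hc
    rw [Ideal.mem_comap, mem_col']
    rw [mem_col'] at hc
    intro a ha
    refine Submodule.span_induction (p := fun a _ => algebraMap A B c * a ∈ Y.map (algebraMap A B))
      ?_ ?_ ?_ ?_ ha
    · rintro _ ⟨a, ha, rfl⟩
      rw [← map_mul]
      exact Ideal.mem_map_of_mem _ (hc a ha)
    · simp
    · intro a b _ _ h1 h2; rw [mul_add]; exact add_mem h1 h2
    · intro r a _ h1; rw [smul_eq_mul, mul_left_comm]; exact Ideal.mul_mem_left _ _ h1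
  · intro c hc
    rw [mem_col'] at hc
    obtain ⟨n, s, hs⟩ := Submodule.fg_iff_exists_fin_generating_family.1
      ((isNoetherianRing_iff_ideal_fg A).1 inferInstance I)
    let g : A →ₗ[A] (Fin n → A ⧸ Y) :=
      LinearMap.pi (fun j => (Submodule.mkQ Y).comp (LinearMap.mulRight A (s j)))
    have hker : LinearMap.ker g ≤ Submodule.colon Y (I : Set A) := by
      intro a ha
      rw [mem_col']
      intro b hb
      rw [LinearMap.mem_ker] at ha
      have ha' : ∀ j, a * s j ∈ Y := by
        intro j
        have := congrFun ha j
        exact (Submodule.Quotient.mk_eq_zero Y).1 this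
      change b ∈ I at hb
      rw [← hs] at hb
      refine Submodule.span_induction (p := fun b _ => a * b ∈ Y) ?_ ?_ ?_ ?_ hb
      · rintro _ ⟨j, rfl⟩; exact ha' j
      · simp
      · intro x y _ _ h1 h2; rw [mul_add]; exact add_mem h1 h2
      · intro r x _ h1; rw [smul_eq_mul, mul_left_comm]; exact Ideal.mul_mem_left _ _ h1
    have hex : Function.Exact (LinearMap.ker g).subtype g := LinearMap.exact_subtype_ker_map g
    have hB := Module.Flat.lTensor_exact B hex
    -- elements of Y.map die
    have hY : ∀ b ∈ Y.map (algebraMap A B), (LinearMap.lTensor B (Submodule.mkQ Y)) (b ⊗ₜ[A] (1:A)) = 0 := by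
      intro b hb
      refine Submodule.span_induction (p := fun b _ => (LinearMap.lTensor B (Submodule.mkQ Y)) (b ⊗ₜ[A] (1:A)) = 0)
        ?_ ?_ ?_ ?_ hb
      · rintro _ ⟨a, ha, rfl⟩
        rw [Algebra.algebraMap_eq_smul_one, TensorProduct.smul_tmul, LinearMap.lTensor_tmul]
        have : (Submodule.mkQ Y) (a • (1:A)) = 0 := by
          rw [Submodule.mkQ_apply, Submodule.Quotient.mk_eq_zero]; simpa using ha
        rw [this, TensorProduct.tmul_zero]
      · simp
      · intro x y _ _ h1 h2; rw [TensorProduct.add_tmul, map_add, h1, h2, add_zero]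
      · intro r x _ h1
        have : (LinearMap.lTensor B (Submodule.mkQ Y)) ((r • x) ⊗ₜ[A] (1:A))
          = r • (LinearMap.lTensor B (Submodule.mkQ Y)) (x ⊗ₜ[A] (1:A)) := by
          simp [TensorProduct.smul_tmul']
        rw [this, h1, smul_zero]
    have hz : (LinearMap.lTensor B g) (c ⊗ₜ[A] (1:A)) = 0 := by
      have hg1 : g 1 = ∑ j, LinearMap.single A (fun _ => A ⧸ Y) j (Submodule.mkQ Y (s j)) := by
        ext j
        simp [g, Finset.sum_apply, Pi.single_apply]
      rw [LinearMap.lTensor_tmul, hg1, TensorProduct.tmul_sum]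
      refine Finset.sum_eq_zero fun j _ => ?_
      have h1 := hY (c * algebraMap A B (s j)) (hc _ (Ideal.mem_map_of_mem _ (by
        rw [← hs]; exact Submodule.subset_span ⟨j, rfl⟩)))
      rw [mul_comm, ← Algebra.smul_def, TensorProduct.smul_tmul, LinearMap.lTensor_tmul] at h1
      have h2 := congrArg (LinearMap.lTensor B (LinearMap.single A (fun _ : Fin n => A ⧸ Y) j)) h1
      rw [LinearMap.lTensor_tmul, map_zero] at h2
      simpa using h2
    obtain ⟨t, ht⟩ := (hB _).1 hz
    have key : ∀ t : B ⊗[A] (LinearMap.ker g),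
        (TensorProduct.rid A B) (LinearMap.lTensor B (LinearMap.ker g).subtype t)
          ∈ (Submodule.colon Y (I : Set A)).map (algebraMap A B) := by
      intro t
      induction t using TensorProduct.induction_on with
      | zero => simp
      | tmul b a =>
        rw [LinearMap.lTensor_tmul, TensorProduct.rid_tmul, Algebra.smul_def]
        exact Ideal.mul_mem_right _ _ (Ideal.mem_map_of_mem _ (hker a.2))
      | add x y hx hy => rw [map_add, map_add]; exact add_mem hx hy
    have := key t
    rw [ht, TensorProduct.rid_tmul, one_smul] at this
    exact this

lemma dl_map [IsNoetherianRing A] [Module.FaithfullyFlat A B] {I J : Ideal A}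
    (h : DirectlyLinked I J) :
    DirectlyLinked (I.map (algebraMap A B)) (J.map (algebraMap A B)) := by
  obtain ⟨x, y, z, hx, hy, hz, hr, rfl⟩ := h
  refine ⟨algebraMap A B x, algebraMap A B y, algebraMap A B z, Ideal.mem_map_of_mem _ hx,
    Ideal.mem_map_of_mem _ hy, Ideal.mem_map_of_mem _ hz, ?_, ?_⟩
  · exact hr.of_faithfullyFlat (S := B)
  · rw [colon_map, Ideal.map_span]
    simp [Set.image_insert_eq]

lemma licci_map [IsNoetherianRing A] [Module.FaithfullyFlat A B] {I : Ideal A}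
    (h : Licci I) : Licci (I.map (algebraMap A B)) := by
  obtain ⟨C, hC, x, y, z, hr, hCe⟩ := h
  have hl : Linked (I.map (algebraMap A B)) (C.map (algebraMap A B)) := by
    unfold Linked at hC ⊢
    clear hCe
    induction hC with
    | refl => exact .refl
    | tail _ h ih => exact ih.tail (dl_map h)
  refine ⟨_, hl, algebraMap A B x, algebraMap A B y, algebraMap A B z,
    hr.of_faithfullyFlat (S := B), ?_⟩
  rw [hCe, Ideal.map_span]
  simp [Set.image_insert_eq]

end flat

lemma minors2_map {R S : Type*} [CommRing R] [CommRing S] (f : R →+* S)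
    (Φ : Matrix (Fin 2) (Fin 4) R) : (minors2 Φ).map f = minors2 (Φ.map f) := by
  unfold minors2
  rw [Ideal.map_span]
  congr 1
  ext d
  constructor
  · rintro ⟨_, ⟨r, c, hr, hc, rfl⟩, rfl⟩
    exact ⟨r, c, hr, hc, by rw [RingHom.map_det]; rfl⟩
  · rintro ⟨r, c, hr, hc, rfl⟩
    exact ⟨_, ⟨r, c, hr, hc, rfl⟩, by rw [RingHom.map_det]; rfl⟩

end S9

namespace S9
open TensorProduct

section poly
variable {k : Type*} [Field k] {e : ℕ}

lemma spanX_eq (K : Type*) [Field K] (e : ℕ) :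
    Ideal.span (Set.range (MvPolynomial.X : Fin e → MvPolynomial (Fin e) K))
      = RingHom.ker (MvPolynomial.constantCoeff (R := K) (σ := Fin e)) := by
  ext p
  rw [← Set.image_univ, MvPolynomial.mem_ideal_span_X_image, RingHom.mem_ker,
    MvPolynomial.constantCoeff_eq]
  constructor
  · intro h
    by_contra h0
    obtain ⟨i, _, hi⟩ := h 0 (MvPolynomial.mem_support_iff.2 h0)
    simp at hi
  · intro h m hm
    by_contra! hc
    have : m = 0 := by ext i; exact hc i (Set.mem_univ i)
    subst this
    exact (MvPolynomial.mem_support_iff.1 hm) h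

lemma X_mul_mem {K : Type*} [Field K] {s : Set (Fin e)} {i : Fin e} (hi : i ∉ s)
    {c : MvPolynomial (Fin e) K}
    (h : MvPolynomial.X i * c ∈ Ideal.span (MvPolynomial.X '' s)) :
    c ∈ Ideal.span (MvPolynomial.X '' s) := by
  rw [MvPolynomial.mem_ideal_span_X_image] at h ⊢
  intro m hm
  obtain ⟨j, hj, hne⟩ := h (Finsupp.single i 1 + m) (by
    rw [MvPolynomial.mem_support_iff, MvPolynomial.coeff_X_mul]
    exact MvPolynomial.mem_support_iff.1 hm)
  refine ⟨j, hj, ?_⟩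
  have hij : i ≠ j := fun h => hi (h ▸ hj)
  simpa [Finsupp.single_apply, hij] using hne

lemma reg_X_aux {K : Type*} [Field K] (L : List (Fin e)) (hL : L.Nodup) (s : Set (Fin e))
    (hs : ∀ i ∈ L, i ∉ s) :
    Reg (L.map (MvPolynomial.X : Fin e → MvPolynomial (Fin e) K))
      (Ideal.span (MvPolynomial.X '' s)) := by
  induction L generalizing s with
  | nil => trivial
  | cons i L ih =>
    refine ⟨fun c hc => X_mul_mem (hs i (by simp)) hc, ?_⟩
    rw [← Ideal.span_union, ← Set.image_singleton, ← Set.image_union]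
    refine ih (List.nodup_cons.1 hL).2 _ ?_
    intro j hj hj'
    rcases hj' with h | h
    · exact hs j (by simp [hj]) h
    · rw [Set.mem_singleton_iff] at h
      subst h
      exact (List.nodup_cons.1 hL).1 hj

lemma reg_X (K : Type*) [Field K] (e : ℕ) :
    Reg (List.ofFn (MvPolynomial.X : Fin e → MvPolynomial (Fin e) K)) ⊥ := by
  have := reg_X_aux (K := K) (List.finRange e) (List.nodup_finRange e) ∅ (by simp)
  simpa [List.ofFn_eq_map] using this

lemma flat_map (k K : Type*) [Field k] [Field K] [Algebra k K] (e : ℕ) :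
    (MvPolynomial.map (σ := Fin e) (algebraMap k K)).Flat := by
  have h1 : (MvPolynomial.map (σ := Fin e) (algebraMap k K))
    = ((MvPolynomial.algebraTensorAlgEquiv (σ := Fin e) k K).toRingEquiv.toRingHom).comp
      (Algebra.TensorProduct.includeRight (R := k) (A := K) (B := MvPolynomial (Fin e) k)).toRingHom := by
    apply RingHom.ext
    intro p
    have := MvPolynomial.algebraTensorAlgEquiv_tmul (σ := Fin e) k K (1 : K) p
    rw [one_smul] at this
    exact this.symm
  rw [h1]
  refine RingHom.Flat.comp ?_ (RingHom.Flat.of_bijective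
    (MvPolynomial.algebraTensorAlgEquiv (σ := Fin e) k K).bijective)
  letI := Algebra.TensorProduct.rightAlgebra (R := k) (A := K) (B := MvPolynomial (Fin e) k)
  change (algebraMap (MvPolynomial (Fin e) k) (K ⊗[k] MvPolynomial (Fin e) k)).Flat
  rw [RingHom.flat_algebraMap_iff]
  exact Module.Flat.of_linearEquiv
    (Algebra.TensorProduct.commRight k (MvPolynomial (Fin e) k) K).toLinearEquiv.symm

end poly
end S9


/-- **Proposition 2.4 (first case).** Let `k` be a field, `e ≥ 3`, `𝓠 = k[X₁, …, X_e]`,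
and `Q` the localization of `𝓠` at the maximal ideal `𝔪 = (X₁, …, X_e)`.  Let `Φ` be a
`2 × 4` matrix of linear forms in `𝓠` and `𝓘` the ideal of `2 × 2` minors of `Φ`, and
assume `𝓘` contains a `𝓠`-regular sequence of length `3`.  Then the extension `I` of
`𝓘` to `Q` is a grade `3` perfect ideal of resolution format `(1, 6, 8, 3)` and `I` is
not licci.  (The hypothesis `𝔪.IsPrime` is a consequence of `h𝔪`.) -/
theorem stmt_9 (k : Type*) [Field k] (e : ℕ) (he : 3 ≤ e)
    (𝔪 : Ideal (MvPolynomial (Fin e) k))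
    (h𝔪 : 𝔪 = Ideal.span (Set.range MvPolynomial.X)) [𝔪.IsPrime]
    (Φ : Matrix (Fin 2) (Fin 4) (MvPolynomial (Fin e) k))
    (hΦ : ∀ i j, (Φ i j).IsHomogeneous 1)
    (𝓘 : Ideal (MvPolynomial (Fin e) k)) (h𝓘 : 𝓘 = minors2 Φ)
    (hreg : ∃ x y z : MvPolynomial (Fin e) k, x ∈ 𝓘 ∧ y ∈ 𝓘 ∧ z ∈ 𝓘 ∧
      RingTheory.Sequence.IsRegular (MvPolynomial (Fin e) k) [x, y, z]) :
    IsGrade3PerfectOfFormat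
        (𝓘.map (algebraMap (MvPolynomial (Fin e) k) (Localization.AtPrime 𝔪))) 6 3 ∧
      ¬ Licci (𝓘.map (algebraMap (MvPolynomial (Fin e) k) (Localization.AtPrime 𝔪))) := by
  subst h𝓘
  obtain ⟨x, y, z, hx, hy, hz, hr⟩ := hreg
  have hsp : ∀ i j, Φ i j ∈ Submodule.span k (Set.range MvPolynomial.X) := by
    intro i j
    rw [← MvPolynomial.homogeneousSubmodule_one_eq_span_X]
    exact hΦ i j
  have hΦm : ∀ i j, Φ i j ∈ 𝔪 := by
    intro i j
    rw [h𝔪]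
    exact Submodule.span_le_restrictScalars k (MvPolynomial (Fin e) k) _ (hsp i j)
  have hle : minors2 Φ ≤ 𝔪 := by
    refine Ideal.span_le.2 ?_
    rintro _ ⟨r, c, _, _, rfl⟩
    rw [Matrix.det_fin_two]
    exact sub_mem (Ideal.mul_mem_right _ _ (hΦm _ _)) (Ideal.mul_mem_right _ _ (hΦm _ _))
  have hr1 := RingTheory.Sequence.IsWeaklyRegular.isRegular_of_isLocalization_of_mem
    (Localization.AtPrime 𝔪) 𝔪 hr.toIsWeaklyRegular (by
      intro r hr
      simp only [List.mem_cons, List.not_mem_nil, or_false] at hr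
      rcases hr with rfl | rfl | rfl
      · exact hle hx
      · exact hle hy
      · exact hle hz)
  constructor
  · rw [S9.minors2_map]
    refine S9.part1 _ ?_ (x := algebraMap _ _ x) (y := algebraMap _ _ y) (z := algebraMap _ _ z)
      ?_ ?_ ?_ hr1
    · intro i j
      rw [← Localization.AtPrime.map_eq_maximalIdeal]
      exact Ideal.mem_map_of_mem _ (hΦm i j)
    · rw [← S9.minors2_map]; exact Ideal.mem_map_of_mem _ hx
    · rw [← S9.minors2_map]; exact Ideal.mem_map_of_mem _ hy
    · rw [← S9.minors2_map]; exact Ideal.mem_map_of_mem _ hz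
  · intro hlic
    let K := AlgebraicClosure k
    let φ : MvPolynomial (Fin e) k →+* MvPolynomial (Fin e) K := MvPolynomial.map (algebraMap k K)
    have hφ : φ.Flat := S9.flat_map k K e
    let 𝔪' : Ideal (MvPolynomial (Fin e) K) := Ideal.span (Set.range MvPolynomial.X)
    have h𝔪' : 𝔪' = RingHom.ker (MvPolynomial.constantCoeff (R := K) (σ := Fin e)) := S9.spanX_eq K e
    have hp : 𝔪'.IsPrime := by rw [h𝔪']; exact RingHom.ker_isPrime _
    have hcm : 𝔪 = 𝔪'.comap φ := by
      rw [h𝔪, S9.spanX_eq, h𝔪']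
      ext p
      simp [φ, RingHom.mem_ker, MvPolynomial.constantCoeff_map]
    let f : Localization.AtPrime 𝔪 →+* Localization.AtPrime 𝔪' := Localization.localRingHom 𝔪 𝔪' φ hcm
    have hf : f.Flat := RingHom.Flat.localRingHom hφ 𝔪' 𝔪 hcm
    have hfl : IsLocalHom f := Localization.isLocalHom_localRingHom 𝔪 𝔪' φ hcm
    letI : Algebra (Localization.AtPrime 𝔪) (Localization.AtPrime 𝔪') := f.toAlgebra
    have : Module.Flat (Localization.AtPrime 𝔪) (Localization.AtPrime 𝔪') := hf
    have : IsLocalHom (algebraMap (Localization.AtPrime 𝔪) (Localization.AtPrime 𝔪')) := hfl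
    have hff : Module.FaithfullyFlat (Localization.AtPrime 𝔪) (Localization.AtPrime 𝔪') :=
      Module.FaithfullyFlat.of_flat_of_isLocalHom
    have hlic' := S9.licci_map (B := Localization.AtPrime 𝔪') hlic
    let ψ := algebraMap (MvPolynomial (Fin e) K) (Localization.AtPrime 𝔪')
    have hcomp : ∀ p, f (algebraMap _ _ p) = ψ (φ p) := fun p =>
      Localization.localRingHom_to_map 𝔪 𝔪' φ hcm p
    have hr2 := hr1.of_faithfullyFlat (S := Localization.AtPrime 𝔪')
    have halg : algebraMap (Localization.AtPrime 𝔪) (Localization.AtPrime 𝔪') = f := rfl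
    have hcm2 : (minors2 Φ).map (f.comp (algebraMap _ (Localization.AtPrime 𝔪)))
      = minors2 (Φ.map (fun p => ψ (φ p))) := by
      rw [S9.minors2_map]
      congr 1
      ext i j
      exact hcomp _
    have hmem : ∀ p ∈ minors2 Φ, f (algebraMap _ _ p) ∈ minors2 (Φ.map (fun p => ψ (φ p))) := by
      intro p hp
      rw [← hcm2]
      exact Ideal.mem_map_of_mem (f.comp (algebraMap _ (Localization.AtPrime 𝔪))) hp
    rw [halg, Ideal.map_map, hcm2] at hlic'
    refine S9.not_licci_local (K := K) he (X := fun i => ψ (MvPolynomial.X i)) ?_ ?_ ?_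
      (hmem x hx) (hmem y hy) (hmem z hz) (S9.reg_of_weak hr2.toIsWeaklyRegular) hlic'
    · have h1 := (S9.weak_of_reg (S9.reg_X K e)).of_isLocalization (Localization.AtPrime 𝔪')
        𝔪'.primeCompl
      rw [List.map_ofFn] at h1
      exact S9.reg_of_weak h1
    · rw [← Localization.AtPrime.map_eq_maximalIdeal, Ideal.map_span, ← Set.range_comp]
      rfl
    · intro i j
      have h1 : φ (Φ i j) ∈ Submodule.span K (Set.range MvPolynomial.X) := by
        rw [← MvPolynomial.homogeneousSubmodule_one_eq_span_X]
        exact (hΦ i j).map _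
      have h2 := Submodule.mem_map_of_mem
        (f := (IsScalarTower.toAlgHom K (MvPolynomial (Fin e) K) (Localization.AtPrime 𝔪')).toLinearMap) h1
      rw [Submodule.map_span, ← Set.range_comp] at h2
      exact h2
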